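/- arXiv:2409.02593 — 3 statements merged into one kernel-verified Lean document; each statement's English description precedes it below -/
import Mathlib

section
/- Let G be a k-connected graph (k ≥ 2) with n ≥ 3 vertices and e edges, minimum degree δ, and maximum degree Δ. If the first Zagreb index satisfies M₁(G) ≥ (n − k − 1)Δ² + (e(δ + n − k − 1))² / (4δ(n − k − 1)(k + 1)), then G is Hamiltonian or G is the complete bipartite graph K_{k, k+1}. -/
open Finset

/-- `G` is `k`-connected: more than `k` vertices, and deleting fewer than `k`
vertices leaves a connected graph. -/
def KConnected {V : Type*} [Fintype V] (k : ℕ) (G : SimpleGraph V) : Prop :=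
  k < Fintype.card V ∧
    ∀ S : Finset V, S.card < k → (G.induce ((↑S : Set V)ᶜ)).Connected

namespace ZH
variable {V : Type*} {G : SimpleGraph V}

/-- A list which is a cycle of `G`. -/
def Cyc (G : SimpleGraph V) (l : List V) : Prop :=
  l.Nodup ∧ 3 ≤ l.length ∧ l.IsChain G.Adj ∧ ∀ x ∈ l.getLast?, ∀ y ∈ l.head?, G.Adj x y

lemma Cyc.swap {a b : List V} (h : Cyc G (a ++ b)) : Cyc G (b ++ a) := by
  rcases eq_or_ne a [] with rfl | ha
  · simpa using h
  rcases eq_or_ne b [] with rfl | hb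
  · simpa using h
  obtain ⟨h1, h2, h3, h4⟩ := h
  rw [List.isChain_append] at h3
  refine ⟨?_, ?_, ?_, ?_⟩
  · exact (List.perm_append_comm.nodup_iff).1 h1
  · simp at h2 ⊢; omega
  · rw [List.isChain_append]
    refine ⟨h3.2.1, h3.1, ?_⟩
    intro x hx y hy
    apply h4 x _ y _
    · rw [List.getLast?_append_of_ne_nil _ hb]; exact hx
    · rw [List.head?_append_of_ne_nil _ ha]; exact hy
  · intro x hx y hy
    rw [List.getLast?_append_of_ne_nil _ ha] at hx
    rw [List.head?_append_of_ne_nil _ hb] at hy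
    exact h3.2.2 x hx y hy

lemma next_eq [DecidableEq V] {l m : List V} {x : V} (hl : l.Nodup) (hx : x ∈ l) (h : l ~r (m ++ [x])) :
    l.next x hx = (m ++ [x]).head (by simp) := by
  have hn : (m ++ [x]).Nodup := (h.nodup_iff).1 hl
  rw [List.isRotated_next_eq h hl hx]
  have := List.next_getLast_eq_head (m ++ [x]) (by simp) hn
  simp at this
  simpa using this

/-- Paths in induced subgraphs as lists. -/
lemma exists_path {s : Set V} {a b : s} (h : (G.induce s).Reachable a b) :
    ∃ p : List V, p.Nodup ∧ p.IsChain G.Adj ∧ p.head? = some (a : V) ∧ p.getLast? = some (b : V) ∧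
      ∀ z ∈ p, z ∈ s := by
  classical
  obtain ⟨w⟩ := h
  refine ⟨(w.toPath : (G.induce s).Walk a b).support.map Subtype.val, ?_, ?_, ?_, ?_, ?_⟩
  · exact (List.nodup_map_iff Subtype.val_injective).2 w.toPath.2.support_nodup
  · have := (w.toPath : (G.induce s).Walk a b).isChain_adj_support
    rw [List.isChain_map]
    exact this
  · rw [List.head?_map, List.head?_eq_some_head (SimpleGraph.Walk.support_ne_nil _)]
    simp
  · rw [List.getLast?_map, List.getLast?_eq_some_getLast (SimpleGraph.Walk.support_ne_nil _)]
    simp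
  · intro z hz
    simp at hz
    exact hz.1

lemma Cyc.extend {l p : List V} (hl : Cyc G l) (hp : p.Nodup) (hpc : p.IsChain G.Adj)
    (hd : ∀ z ∈ p, z ∉ l)
    (h1 : ∀ x ∈ l.getLast?, ∀ y ∈ p.head?, G.Adj x y)
    (h2 : ∀ x ∈ p.getLast?, ∀ y ∈ l.head?, G.Adj x y) (hne : p ≠ []) : Cyc G (l ++ p) := by
  obtain ⟨a1, a2, a3, a4⟩ := hl
  refine ⟨?_, ?_, ?_, ?_⟩
  · rw [List.nodup_append']
    exact ⟨a1, hp, fun z hz hz' => hd z hz' hz⟩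
  · simp; omega
  · rw [List.isChain_append]; exact ⟨a3, hpc, h1⟩
  · have : l ≠ [] := by rintro rfl; simp at a2
    rw [List.getLast?_append_of_ne_nil _ hne, List.head?_append_of_ne_nil _ this]
    exact h2

lemma Cyc.cross {A B p : List V} (hl : Cyc G (A ++ B)) (hp : p.Nodup) (hpc : p.IsChain G.Adj)
    (hd : ∀ z ∈ p, z ∉ A ++ B)
    (h1 : ∀ x ∈ A.getLast?, ∀ y ∈ p.head?, G.Adj x y)
    (h2 : ∀ x ∈ p.getLast?, ∀ y ∈ B.getLast?, G.Adj x y)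
    (h3 : ∀ x ∈ A.head?, ∀ y ∈ B.head?, G.Adj x y)
    (hne : p ≠ []) (hA : A ≠ []) (hB : B ≠ []) : Cyc G (A ++ (p ++ B.reverse)) := by
  obtain ⟨a1, a2, a3, a4⟩ := hl
  rw [List.isChain_append] at a3
  rw [List.nodup_append'] at a1
  refine ⟨?_, ?_, ?_, ?_⟩
  · rw [List.nodup_append', List.nodup_append']
    refine ⟨a1.1, ⟨hp, List.nodup_reverse.2 a1.2.1, ?_⟩, ?_⟩
    · intro z hz hz'
      exact hd z hz (by simp at hz' ⊢; exact Or.inr hz')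
    · intro z hz hz'
      simp at hz'
      rcases hz' with h | h
      · exact hd z h (by simp [hz])
      · exact a1.2.2 hz h
  · simp at a2 ⊢; omega
  · rw [List.isChain_append, List.isChain_append]
    refine ⟨a3.1, ⟨hpc, ?_, ?_⟩, ?_⟩
    · rw [List.isChain_reverse]
      exact a3.2.1.imp (fun a b h => h.symm)
    · rw [List.head?_reverse]; exact h2
    · rw [List.head?_append_of_ne_nil _ hne]; exact h1
  · rw [List.getLast?_append_of_ne_nil _ (by simp [hne]),
      List.getLast?_append_of_ne_nil _ (by simp [hB]), List.getLast?_reverse,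
      List.head?_append_of_ne_nil _ hA]
    intro x hx y hy
    exact (h3 y hy x hx).symm

lemma Cyc.isHamiltonian [Fintype V] [DecidableEq V] {l : List V} (hl : Cyc G l) (hall : ∀ v, v ∈ l) :
    G.IsHamiltonian := by
  intro _
  obtain ⟨a1, a2, a3, a4⟩ := hl
  have hne : l ≠ [] := by rintro rfl; simp at a2
  have hadj : G.Adj (l.getLast hne) (l.head hne) :=
    a4 _ (by simp [List.getLast?_eq_some_getLast hne]) _ (by simp [List.head?_eq_some_head hne])
  set w := SimpleGraph.Walk.ofSupport l hne a3 with hw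
  have hs : w.support = l := SimpleGraph.Walk.support_ofSupport hne a3
  have hwp : w.IsPath := by rw [SimpleGraph.Walk.isPath_def, hs]; exact a1
  refine ⟨_, SimpleGraph.Walk.cons hadj w, ?_⟩
  rw [SimpleGraph.Walk.isHamiltonianCycle_iff_isCycle_and_support_count_tail_eq_one]
  constructor
  · rw [SimpleGraph.Walk.cons_isCycle_iff]
    refine ⟨hwp, ?_⟩
    intro hmem
    have hlen : w.length = l.length - 1 := SimpleGraph.Walk.length_ofSupport hne a3
    have := hwp.length_eq_one_of_mem_edges (by rwa [Sym2.eq_swap] at hmem)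
    omega
  · intro a
    simp only [SimpleGraph.Walk.support_cons, List.tail_cons, hs]
    exact List.count_eq_one_of_mem a1 (hall a)

lemma le_degree [Fintype V] [DecidableEq V] [DecidableRel G.Adj] {k : ℕ} (hc : KConnected k G) (v : V) :
    k ≤ G.degree v := by
  by_contra! h
  have hconn := hc.2 (G.neighborFinset v) (by simpa using h)
  have hv : v ∈ ((↑(G.neighborFinset v) : Set V)ᶜ) := by simp
  have hcard : (insert v (G.neighborFinset v)).card < Fintype.card V := by
    have := Finset.card_insert_le v (G.neighborFinset v)
    simp only [SimpleGraph.card_neighborFinset_eq_degree] at this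
    have := hc.1
    omega
  obtain ⟨w, hw⟩ : ∃ w, w ∉ insert v (G.neighborFinset v) := by
    by_contra! hh
    rw [Finset.eq_univ_iff_forall.2 hh] at hcard
    simp at hcard
  have hw' : w ∈ ((↑(G.neighborFinset v) : Set V)ᶜ) := by
    simp at hw ⊢; tauto
  obtain ⟨p⟩ := hconn.preconnected ⟨v, hv⟩ ⟨w, hw'⟩
  cases p with
  | nil => simp at hw
  | cons h p =>
    rename_i z
    have := z.2
    simp at h this
    exact this h

lemma exists_cyc [Fintype V] [DecidableEq V] {k : ℕ} (hk : 2 ≤ k) (hc : KConnected k G) :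
    ∃ l, Cyc G l := by
  classical
  have hne : Nonempty V := Fintype.card_pos_iff.1 (by have := hc.1; omega)
  obtain ⟨v⟩ := hne
  have hd := le_degree hc v
  rw [← SimpleGraph.card_neighborFinset_eq_degree] at hd
  obtain ⟨a, ha, b, hb, hab⟩ := Finset.one_lt_card.1 (lt_of_lt_of_le (by omega : 1 < k) hd)
  rw [SimpleGraph.mem_neighborFinset] at ha hb
  have hconn := hc.2 {v} (by simp; omega)
  obtain ⟨p, p1, p2, p3, p4, p5⟩ := exists_path
    (hconn.preconnected ⟨a, by simpa using ha.ne'⟩ ⟨b, by simpa using hb.ne'⟩)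
  refine ⟨v :: p, ?_, ?_, ?_, ?_⟩
  · rw [List.nodup_cons]
    exact ⟨fun h => by simpa using p5 v h, p1⟩
  · match p with
    | [] => simp at p3
    | [z] => simp at p3 p4; exact absurd (p3.symm.trans p4) hab
    | z :: z' :: t => simp
  · rw [List.isChain_cons]
    refine ⟨?_, p2⟩
    intro y hy
    rw [p3] at hy
    simp at hy; subst hy; exact ha
  · have : p ≠ [] := by rintro rfl; simp at p3
    intro x hx y hy
    rw [List.getLast?_cons_of_ne_nil this, p4] at hx
    simp at hx hy
    subst hx hy
    exact hb.symm

lemma split_at {l : List V} (hl : Cyc G l) {x : V} (hx : x ∈ l) :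
    ∃ m, l ~r (m ++ [x]) ∧ Cyc G (m ++ [x]) := by
  obtain ⟨a, b, rfl⟩ := List.append_of_mem hx
  have e : a ++ x :: b = (a ++ [x]) ++ b := by simp
  refine ⟨b ++ a, ?_, ?_⟩
  · rw [e, List.append_assoc b]
    exact List.isRotated_append
  · rw [e] at hl
    rw [List.append_assoc b]
    exact hl.swap

/-- The Chvátal–Erdős theorem. -/
theorem chvatal_erdos [Fintype V] [DecidableEq V] {k : ℕ} (hk : 2 ≤ k) (hc : KConnected k G)
    (hH : ¬ G.IsHamiltonian) : ∃ I : Finset V, I.card = k + 1 ∧ ∀ x ∈ I, ∀ y ∈ I, ¬ G.Adj x y := by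
  classical
  obtain ⟨l, hl, hmax⟩ : ∃ l, Cyc G l ∧ ∀ l', Cyc G l' → l'.length ≤ l.length := by
    by_contra! hno
    have : ∀ n : ℕ, ∃ l, Cyc G l ∧ n ≤ l.length := by
      intro n
      induction n with
      | zero => obtain ⟨l, hl⟩ := exists_cyc hk hc; exact ⟨l, hl, by simp⟩
      | succ n ih =>
        obtain ⟨l, hl, hn⟩ := ih
        obtain ⟨l', hl', hn'⟩ := hno l hl
        exact ⟨l', hl', by omega⟩
    obtain ⟨l, hl, hn⟩ := this (Fintype.card V + 1)
    have := hl.1.length_le_card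
    omega
  obtain ⟨v, hv⟩ : ∃ v, v ∉ l := by
    by_contra! h
    exact hH (hl.isHamiltonian h)
  set s : Set V := {z | z ∉ l} with hs
  let H : V → Prop := fun h => ∃ hh : h ∈ s, (G.induce s).Reachable ⟨v, hv⟩ ⟨h, hh⟩
  have Hv : H v := ⟨hv, SimpleGraph.Reachable.refl _⟩
  have Hstep : ∀ a b, H a → G.Adj a b → b ∉ l → H b := by
    rintro a b ⟨ha, har⟩ hab hb
    refine ⟨hb, har.trans (SimpleGraph.Adj.reachable ?_)⟩
    simpa using hab
  set S : Finset V := univ.filter (fun x => x ∈ l ∧ ∃ h, H h ∧ G.Adj x h) with hS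
  have memS : ∀ x, x ∈ S ↔ x ∈ l ∧ ∃ h, H h ∧ G.Adj x h := by intro x; simp [hS]
  have hpath : ∀ x ∈ S, ∀ y ∈ S, ∃ p : List V, p ≠ [] ∧ p.Nodup ∧ p.IsChain G.Adj ∧
      (∀ z ∈ p, z ∉ l) ∧ (∀ z ∈ p.head?, G.Adj x z) ∧ (∀ z ∈ p.getLast?, G.Adj z y) := by
    intro x hx y hy
    obtain ⟨_, a, ⟨ha, har⟩, hxa⟩ := (memS x).1 hx
    obtain ⟨_, b, ⟨hb, hbr⟩, hyb⟩ := (memS y).1 hy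
    obtain ⟨p, p1, p2, p3, p4, p5⟩ := exists_path (har.symm.trans hbr)
    refine ⟨p, by rintro rfl; simp at p3, p1, p2, p5, ?_, ?_⟩
    · intro z hz; rw [p3] at hz; simp at hz; subst hz; exact hxa
    · intro z hz; rw [p4] at hz; simp at hz; subst hz; exact hyb.symm
  -- successor is not a neighbour of H
  have hsucc : ∀ x (hx : x ∈ l), x ∈ S → l.next x hx ∉ S := by
    intro x hx hxS hnS
    obtain ⟨m, hr, hcm⟩ := split_at hl hx
    have hne := next_eq hl.1 hx hr
    obtain ⟨p, p0, p1, p2, p3, p4, p5⟩ := hpath x hxS _ hnS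
    have := hcm.extend (p := p) p1 p2 (fun z hz hz' => p3 z hz (hr.mem_iff.2 hz'))
      (by
        intro a ha b hb
        simp at ha; subst ha; exact p4 b hb)
      (by
        intro a ha b hb
        rw [List.head?_eq_some_head (by simp : m ++ [x] ≠ [])] at hb
        simp only [Option.mem_def, Option.some.injEq] at hb
        rw [← hne] at hb
        subst hb; exact p5 a ha) p0
    have h1 := hmax _ this
    have h2 := hr.perm.length_eq
    have h3 := List.length_pos_iff.2 p0
    rw [List.length_append] at h1
    omega
  have hcross : ∀ x (hx : x ∈ l) y (hy : y ∈ l), x ∈ S → y ∈ S → x ≠ y →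
      ¬ G.Adj (l.next x hx) (l.next y hy) := by
    intro x hx y hy hxS hyS hxy hadj
    obtain ⟨m, hr, hcm⟩ := split_at hl hx
    have hym : y ∈ m := by
      have := hr.mem_iff.1 hy
      simp at this
      rcases this with h | h
      · exact h
      · exact absurd h.symm hxy
    obtain ⟨c, d, rfl⟩ := List.append_of_mem hym
    have e : (c ++ y :: d) ++ [x] = (c ++ [y]) ++ (d ++ [x]) := by simp
    have hnx := next_eq hl.1 hx hr
    rw [e] at hr hcm
    have hr' : l ~r ((d ++ [x] ++ c) ++ [y]) := by
      refine hr.trans ?_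
      rw [List.append_assoc (d ++ [x])]
      exact List.isRotated_append
    have hny := next_eq hl.1 hy hr'
    obtain ⟨p, p0, p1, p2, p3, p4, p5⟩ := hpath y hyS x hxS
    have hnx' : (c ++ [y]).head? = some (l.next x hx) := by
      rw [hnx]; cases c <;> simp
    have hny' : (d ++ [x]).head? = some (l.next y hy) := by
      rw [hny]; cases d <;> simp
    have := hcm.cross (p := p) p1 p2 (fun z hz hz' => p3 z hz (hr.mem_iff.2 hz'))
      (by
        intro a ha b hb
        simp at ha; subst ha; exact p4 b hb)
      (by
        intro a ha b hb
        simp at hb; subst hb; exact p5 a ha)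
      (by
        intro a ha b hb
        rw [hnx'] at ha
        rw [hny'] at hb
        simp only [Option.mem_def, Option.some.injEq] at ha hb
        subst ha hb
        exact hadj) p0 (by simp) (by simp)
    have h1 := hmax _ this
    have h2 := hr.perm.length_eq
    have h3 := List.length_pos_iff.2 p0
    simp only [List.length_append, List.length_reverse] at h1 h2
    omega
  have hSk : k ≤ S.card := by
    by_contra! hlt
    have hconn := hc.2 S hlt
    obtain ⟨w, hwl, hwS⟩ : ∃ w ∈ l, w ∉ S := by
      by_contra! hall
      have hne : l ≠ [] := by rintro rfl; have := hl.2.1; simp at this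
      have h0 := List.head_mem hne
      exact hsucc _ h0 (hall _ h0) (hall _ (List.next_mem _ _ h0))
    have hvS : v ∈ ((↑S : Set V)ᶜ) := by
      simp only [Set.mem_compl_iff, Finset.mem_coe, memS]; tauto
    have key : ∀ a b : ((↑S : Set V)ᶜ : Set V), (G.induce ((↑S : Set V)ᶜ)).Walk a b → H a → H b := by
      intro a b p
      induction p with
      | nil => exact id
      | cons h p ih =>
        rename_i a b c
        intro ha
        apply ih
        have hab : G.Adj a b := by simpa using h
        refine Hstep _ _ ha hab ?_
        intro hbl
        exact b.2 ((memS _).2 ⟨hbl, _, ha, hab.symm⟩)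
    obtain ⟨p⟩ := hconn.preconnected ⟨v, hvS⟩ ⟨w, by simpa using hwS⟩
    obtain ⟨hw, _⟩ := key _ _ p Hv
    exact hw hwl
  let f : {x // x ∈ S} → V := fun x => l.next x.1 ((memS _).1 x.2).1
  have hf : Function.Injective f := by
    intro x y hxy
    have h1 := List.prev_next l hl.1 x.1 ((memS _).1 x.2).1
    have h2 := List.prev_next l hl.1 y.1 ((memS _).1 y.2).1
    apply Subtype.ext
    rw [← h1, ← h2]
    congr 1
  have hvf : v ∉ S.attach.image f := by
    intro h
    obtain ⟨x, _, hx⟩ := Finset.mem_image.1 h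
    exact hv (hx ▸ List.next_mem _ _ _)
  have hcard : k + 1 ≤ (insert v (S.attach.image f)).card := by
    rw [Finset.card_insert_of_notMem hvf, Finset.card_image_of_injective _ hf]
    simpa using hSk
  have hvx : ∀ x, ¬ G.Adj v (f x) := by
    intro x h
    exact hsucc x.1 ((memS _).1 x.2).1 x.2 ((memS _).2 ⟨List.next_mem _ _ _, v, Hv, h.symm⟩)
  have hind : ∀ x ∈ insert v (S.attach.image f), ∀ y ∈ insert v (S.attach.image f), ¬ G.Adj x y := by
    intro x hx y hy
    simp only [Finset.mem_insert, Finset.mem_image] at hx hy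
    rcases hx with rfl | ⟨a, _, rfl⟩ <;> rcases hy with rfl | ⟨b, _, rfl⟩
    · exact G.irrefl
    · exact hvx b
    · exact fun h => hvx a h.symm
    · intro h
      have hab : a.1 ≠ b.1 := by
        intro hab
        rw [Subtype.ext hab] at h
        exact G.irrefl h
      exact hcross _ _ _ _ a.2 b.2 hab h
  obtain ⟨I, hI, hIc⟩ := Finset.exists_subset_card_eq hcard
  exact ⟨I, hIc, fun x hx y hy => hind x (hI hx) y (hI hy)⟩

lemma iso_bip [Fintype V] [DecidableEq V] {k : ℕ} {I : Finset V} (hI : I.card = k + 1)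
    (hV : Fintype.card V = k + (k + 1)) (hadj : ∀ x y, G.Adj x y ↔ (x ∈ I ↔ y ∉ I)) :
    Nonempty (G ≃g completeBipartiteGraph (Fin k) (Fin (k + 1))) := by
  classical
  have h1 : Fintype.card {x // x ∉ I} = k := by
    rw [Fintype.card_subtype_compl]; simp [hI, hV]
  have h2 : Fintype.card {x // ¬ x ∉ I} = k + 1 := by simp [hI]
  let E := (Equiv.sumCongr (Fintype.equivFinOfCardEq h1) (Fintype.equivFinOfCardEq h2)).symm.trans
    (Equiv.sumCompl (fun x => x ∉ I))
  refine ⟨SimpleGraph.Iso.symm ⟨E, ?_⟩⟩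
  have hl : ∀ a, E (Sum.inl a) ∉ I := fun a => ((Fintype.equivFinOfCardEq h1).symm a).2
  have hr : ∀ a, E (Sum.inr a) ∈ I := fun a => not_not.1 ((Fintype.equivFinOfCardEq h2).symm a).2
  intro a b
  rw [hadj]
  rcases a with a | a <;> rcases b with b | b <;> simp [hl, hr]

lemma ham_bip [Fintype V] [DecidableEq V] {k : ℕ} (hk : 2 ≤ k) {I : Finset V} (hI : I.card = k + 1)
    (hIc : Iᶜ.card = k + 1) (hadj : ∀ x y, G.Adj x y ↔ (x ∈ I ↔ y ∉ I)) :
    G.IsHamiltonian := by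
  classical
  by_contra hH
  have hcard : Fintype.card V = (k + 1) + (k + 1) := by
    rw [← Finset.card_add_card_compl I, hI, hIc]
  have hconn : KConnected (k + 1) G := by
    refine ⟨by omega, fun S hS => ?_⟩
    obtain ⟨a, haI, haS⟩ := Finset.exists_mem_notMem_of_card_lt_card (hS.trans_eq hI.symm)
    obtain ⟨b, hbI, hbS⟩ := Finset.exists_mem_notMem_of_card_lt_card (hS.trans_eq hIc.symm)
    rw [Finset.mem_compl] at hbI
    set A : ((↑S : Set V)ᶜ : Set V) := ⟨a, by simpa using haS⟩
    set B : ((↑S : Set V)ᶜ : Set V) := ⟨b, by simpa using hbS⟩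
    have hAB : (G.induce ((↑S : Set V)ᶜ)).Reachable A B := by
      apply SimpleGraph.Adj.reachable
      simp only [SimpleGraph.comap_adj, hadj]
      exact ⟨fun _ => hbI, fun _ => haI⟩
    rw [SimpleGraph.connected_iff_exists_forall_reachable]
    refine ⟨A, fun x => ?_⟩
    by_cases hx : x.1 ∈ I
    · refine hAB.trans (SimpleGraph.Adj.reachable ?_)
      simp only [SimpleGraph.comap_adj, hadj]
      exact ⟨fun h => absurd h hbI, fun h => absurd hx h⟩
    · refine SimpleGraph.Adj.reachable ?_
      simp only [SimpleGraph.comap_adj, hadj]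
      exact ⟨fun _ => hx, fun _ => haI⟩
  obtain ⟨J, hJ, hJi⟩ := chvatal_erdos (by omega) hconn hH
  obtain ⟨a, haJ, haI⟩ := Finset.exists_mem_notMem_of_card_lt_card (s := I) (t := J) (by omega)
  obtain ⟨b, hbJ, hbI⟩ := Finset.exists_mem_notMem_of_card_lt_card (s := Iᶜ) (t := J) (by omega)
  rw [Finset.mem_compl, not_not] at hbI
  exact hJi b hbJ a haJ ((hadj _ _).2 ⟨fun _ => haI, fun _ => hbI⟩)

lemma sum_deg_indep [Fintype V] [DecidableEq V] [DecidableRel G.Adj] {I : Finset V}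
    (hind : ∀ x ∈ I, ∀ y ∈ I, ¬ G.Adj x y) :
    ∑ u ∈ I, G.degree u = ∑ w ∈ Iᶜ, (G.neighborFinset w ∩ I).card := by
  have := Finset.sum_card_bipartiteAbove_eq_sum_card_bipartiteBelow (s := I) (t := Iᶜ) G.Adj
  convert this using 1
  · refine Finset.sum_congr rfl fun u hu => ?_
    rw [← SimpleGraph.card_neighborFinset_eq_degree]
    congr 1
    ext z
    simp only [SimpleGraph.mem_neighborFinset, Finset.mem_bipartiteAbove, Finset.mem_compl]
    exact ⟨fun h => ⟨fun hz => hind u hu z hz h, h⟩, fun h => h.2⟩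
  · refine Finset.sum_congr rfl fun u hu => ?_
    congr 1
    ext z
    simp only [SimpleGraph.mem_neighborFinset, Finset.mem_bipartiteBelow, Finset.mem_inter]
    rw [G.adj_comm]; tauto

end ZH

set_option maxHeartbeats 1000000 in
theorem zagreb_hamiltonian
    {V : Type*} [Fintype V] [DecidableEq V] [Nonempty V]
    (G : SimpleGraph V) [DecidableRel G.Adj]
    (k n e δ Δ : ℕ) (hk : 2 ≤ k) (hconn : KConnected k G)
    (hn : n = Fintype.card V) (hn3 : 3 ≤ n) (he : e = G.edgeFinset.card)
    (hδ : δ = G.minDegree) (hΔ : Δ = G.maxDegree)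
    (hM : ((∑ v, (G.degree v) ^ 2 : ℕ) : ℝ) ≥
      ((n : ℝ) - k - 1) * Δ ^ 2 +
        ((e : ℝ) * ((δ : ℝ) + n - k - 1)) ^ 2 / (4 * δ * ((n : ℝ) - k - 1) * (k + 1))) :
    G.IsHamiltonian ∨ Nonempty (G ≃g completeBipartiteGraph (Fin k) (Fin (k + 1))) := by
  by_cases hH : G.IsHamiltonian
  · exact Or.inl hH
  obtain ⟨I, hI, hind⟩ := ZH.chvatal_erdos hk hconn hH
  have hkδ : k ≤ δ := by
    obtain ⟨v, hv⟩ := G.exists_minimal_degree_vertex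
    rw [hδ, hv]; exact ZH.le_degree hconn v
  have hδd : ∀ v, δ ≤ G.degree v := fun v => hδ ▸ G.minDegree_le_degree v
  have hdΔ : ∀ v, G.degree v ≤ Δ := fun v => hΔ ▸ G.degree_le_maxDegree v
  obtain ⟨N, hN⟩ : ∃ N, N = Iᶜ.card := ⟨_, rfl⟩
  have hnN : n = N + k + 1 := by
    rw [hn, ← Finset.card_add_card_compl I, hI, hN]; omega
  have hsub : ∀ u ∈ I, G.neighborFinset u ⊆ Iᶜ := by
    intro u hu z hz
    rw [SimpleGraph.mem_neighborFinset] at hz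
    rw [Finset.mem_compl]
    exact fun h => hind u hu z h hz
  have hdN : ∀ u ∈ I, G.degree u ≤ N := by
    intro u hu
    rw [← SimpleGraph.card_neighborFinset_eq_degree, hN]
    exact Finset.card_le_card (hsub u hu)
  obtain ⟨u0, hu0⟩ : I.Nonempty := Finset.card_pos.1 (by omega)
  have hδN : δ ≤ N := (hδd u0).trans (hdN u0 hu0)
  obtain ⟨S, hS⟩ : ∃ S, S = ∑ u ∈ I, G.degree u := ⟨_, rfl⟩
  obtain ⟨T, hT⟩ : ∃ T, T = ∑ u ∈ Iᶜ, G.degree u := ⟨_, rfl⟩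
  have hST : S + T = 2 * e := by
    rw [hS, hT, Finset.sum_add_sum_compl, he, G.sum_degrees_eq_twice_card_edges]
  have hinter : ∀ w ∈ Iᶜ, (G.neighborFinset w ∩ I).card ≤ G.degree w := by
    intro w _
    rw [← SimpleGraph.card_neighborFinset_eq_degree]
    exact Finset.card_le_card Finset.inter_subset_left
  have hS2 := ZH.sum_deg_indep hind
  have hSleT : S ≤ T := by
    rw [hS, hT, hS2]; exact Finset.sum_le_sum hinter
  have hSe : S ≤ e := by omega
  -- real inequalities
  have hcast : (n : ℝ) - k - 1 = N := by rw [hnN]; push_cast; ring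
  have hcast2 : (δ : ℝ) + n - k - 1 = δ + N := by rw [hnN]; push_cast; ring
  rw [hcast, hcast2, ← Finset.sum_add_sum_compl I] at hM
  push_cast at hM
  have hδ0 : (0 : ℝ) < δ := by exact_mod_cast (by omega : 0 < δ)
  have hN0 : (0 : ℝ) < N := by exact_mod_cast (by omega : 0 < N)
  have hk0 : (0 : ℝ) < (k : ℝ) + 1 := by positivity
  have hSr : (S : ℝ) = ∑ u ∈ I, (G.degree u : ℝ) := by rw [hS]; push_cast; rfl
  have hSer : (S : ℝ) ≤ e := by exact_mod_cast hSe
  have hS0 : (0 : ℝ) ≤ S := by positivity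
  have hi : ∀ u ∈ I, 0 ≤ ((G.degree u : ℝ) - δ) * (N - G.degree u) := by
    intro u hu
    have h1 : (δ : ℝ) ≤ G.degree u := by exact_mod_cast hδd u
    have h2 : (G.degree u : ℝ) ≤ N := by exact_mod_cast hdN u hu
    exact mul_nonneg (by linarith) (by linarith)
  have hQ : ∑ u ∈ I, (G.degree u : ℝ) ^ 2 = (δ + N) * S - (k + 1) * δ * N -
      ∑ u ∈ I, ((G.degree u : ℝ) - δ) * (N - G.degree u) := by
    have : ∀ u ∈ I, (G.degree u : ℝ) ^ 2 = (δ + N) * G.degree u - δ * N -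
      ((G.degree u : ℝ) - δ) * (N - G.degree u) := by intro u _; ring
    rw [Finset.sum_congr rfl this, Finset.sum_sub_distrib, Finset.sum_sub_distrib,
      ← Finset.mul_sum, ← hSr]
    simp [hI]; ring
  have hi0 := Finset.sum_nonneg hi
  have hj : ∀ w ∈ Iᶜ, 0 ≤ (Δ : ℝ) ^ 2 - (G.degree w : ℝ) ^ 2 := by
    intro w _
    have h1 : (G.degree w : ℝ) ≤ Δ := by exact_mod_cast hdΔ w
    have : (G.degree w : ℝ) ^ 2 ≤ (Δ : ℝ) ^ 2 := by gcongr
    linarith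
  have hj0 := Finset.sum_nonneg hj
  have hR : ∑ w ∈ Iᶜ, ((Δ : ℝ) ^ 2 - (G.degree w : ℝ) ^ 2) =
      N * Δ ^ 2 - ∑ w ∈ Iᶜ, (G.degree w : ℝ) ^ 2 := by
    rw [Finset.sum_sub_distrib]; simp [← hN]
  obtain ⟨D, hD⟩ : ∃ D : ℝ, D = 4 * δ * N * (k + 1) := ⟨_, rfl⟩
  have hD0 : 0 < D := by rw [hD]; positivity
  rw [← hD] at hM
  have hPS : ((e : ℝ) * (δ + N)) ^ 2 / D = (δ + N) * S - (k + 1) * δ * N +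
      ((δ + N) * S - 2 * (k + 1) * δ * N) ^ 2 / D + (e ^ 2 - S ^ 2) * (δ + N) ^ 2 / D := by
    field_simp
    rw [hD]; ring
  have hp1 : 0 ≤ ((δ + N) * S - 2 * (k + 1) * δ * N : ℝ) ^ 2 / D := by positivity
  have hes : (0 : ℝ) ≤ e ^ 2 - S ^ 2 := by nlinarith
  have hp2 : 0 ≤ ((e : ℝ) ^ 2 - S ^ 2) * (δ + N) ^ 2 / D := by positivity
  have z1 : ((δ + N) * S - 2 * (k + 1) * δ * N : ℝ) ^ 2 / D = 0 := by linarith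
  have z2 : ((e : ℝ) ^ 2 - S ^ 2) * (δ + N) ^ 2 / D = 0 := by linarith
  have z4 : ∑ w ∈ Iᶜ, ((Δ : ℝ) ^ 2 - (G.degree w : ℝ) ^ 2) = 0 := by linarith
  have y1 : (δ + N) * S = 2 * (k + 1) * δ * N := by
    have : ((δ + N) * S - 2 * (k + 1) * δ * N : ℝ) = 0 := by
      rcases div_eq_zero_iff.1 z1 with h | h
      · exact pow_eq_zero_iff (by norm_num) |>.1 h
      · exact absurd h hD0.ne'
    have h : ((δ + N) * S : ℝ) = 2 * (k + 1) * δ * N := by linarith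
    exact_mod_cast h
  have y2 : S = e := by
    rcases div_eq_zero_iff.1 z2 with h | h
    · have h' : (e : ℝ) ^ 2 - S ^ 2 = 0 := by
        rcases mul_eq_zero.1 h with h | h
        · exact h
        · exact absurd h (by positivity)
      have h'' : e ^ 2 = S ^ 2 := by
        have : (e : ℝ) ^ 2 = S ^ 2 := by linarith
        exact_mod_cast this
      exact (Nat.pow_left_injective (by norm_num : 2 ≠ 0) h'').symm
    · exact absurd h hD0.ne'
  have y4 : ∀ w ∈ Iᶜ, G.degree w = Δ := by
    intro w hw
    have h := (Finset.sum_eq_zero_iff_of_nonneg hj).1 z4 w hw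
    have h'' : (G.degree w) ^ 2 = Δ ^ 2 := by
      have : (G.degree w : ℝ) ^ 2 = Δ ^ 2 := by linarith
      exact_mod_cast this
    exact Nat.pow_left_injective (by norm_num : 2 ≠ 0) h''
  have hTS : S = T := by omega
  have hTN : T = N * Δ := by
    rw [hT, Finset.sum_congr rfl y4]; simp [hN]
  have hIw : ∀ w ∈ Iᶜ, G.neighborFinset w ⊆ I := by
    have h : ∑ w ∈ Iᶜ, (G.neighborFinset w ∩ I).card = ∑ w ∈ Iᶜ, G.degree w := by
      rw [← hS2, ← hS, ← hT, hTS]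
    intro w hw
    have h2 := (Finset.sum_eq_sum_iff_of_le hinter).1 h w hw
    rw [← SimpleGraph.card_neighborFinset_eq_degree] at h2
    exact Finset.inter_eq_left.1 (Finset.eq_of_subset_of_card_le Finset.inter_subset_left h2.ge)
  obtain ⟨w0, hw0⟩ : (Iᶜ).Nonempty := Finset.card_pos.1 (by omega)
  have hΔk : Δ ≤ k + 1 := by
    rw [← y4 w0 hw0, ← hI, ← SimpleGraph.card_neighborFinset_eq_degree]
    exact Finset.card_le_card (hIw w0 hw0)
  rcases hδN.eq_or_lt with hEq | hlt
  · have hdeq : ∀ u ∈ I, G.degree u = N := fun u hu =>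
      le_antisymm (hdN u hu) (hEq ▸ hδd u)
    have hnb : ∀ u ∈ I, G.neighborFinset u = Iᶜ := by
      intro u hu
      apply Finset.eq_of_subset_of_card_le (hsub u hu)
      rw [SimpleGraph.card_neighborFinset_eq_degree, hdeq u hu, hN]
    have hadj : ∀ x y, G.Adj x y ↔ (x ∈ I ↔ y ∉ I) := by
      intro x y
      rw [← SimpleGraph.mem_neighborFinset]
      by_cases hx : x ∈ I
      · rw [hnb x hx, Finset.mem_compl]; tauto
      · rw [SimpleGraph.mem_neighborFinset, G.adj_comm]
        by_cases hy : y ∈ I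
        · rw [← SimpleGraph.mem_neighborFinset, hnb y hy, Finset.mem_compl]; tauto
        · have : ¬ G.Adj y x := fun h => hx (hIw y (Finset.mem_compl.2 hy) (by simpa using h))
          tauto
    have hNk : N ≤ k + 1 := by
      have := hδd w0
      rw [y4 w0 hw0] at this; omega
    rcases (by omega : N = k ∨ N = k + 1) with h | h
    · exact Or.inr (ZH.iso_bip hI (by rw [← hn]; omega) hadj)
    · exact Or.inl (ZH.ham_bip hk hI (by rw [← hN, h]) hadj)
  · exfalso
    have z3 : ∑ u ∈ I, ((G.degree u : ℝ) - δ) * (N - G.degree u) = 0 := by linarith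
    have y3 : ∀ u ∈ I, G.degree u = δ ∨ G.degree u = N := by
      intro u hu
      rcases mul_eq_zero.1 ((Finset.sum_eq_zero_iff_of_nonneg hi).1 z3 u hu) with h | h
      · left
        have : (G.degree u : ℝ) = δ := by linarith
        exact_mod_cast this
      · right
        have : (G.degree u : ℝ) = N := by linarith
        exact_mod_cast this
    by_cases hex : ∃ u ∈ I, G.degree u = N
    · obtain ⟨u, hu, hud⟩ := hex
      have hNΔ : N ≤ Δ := hud ▸ hdΔ u
      have e1 : N = k + 1 := by omega
      have e2 : Δ = k + 1 := by omega
      have e3 : δ = k := by omega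
      rw [hTS, hTN, e1, e2, e3] at y1
      have hpos : 0 < (k + 1) * (k + 1) := by positivity
      have : k + (k + 1) = 2 * k := by
        apply Nat.eq_of_mul_eq_mul_right hpos
        rw [y1]; ring
      omega
    · push Not at hex
      have hall : ∀ u ∈ I, G.degree u = δ := fun u hu => (y3 u hu).resolve_right (hex u hu)
      rw [hS, Finset.sum_congr rfl hall] at y1
      simp only [Finset.sum_const, hI, smul_eq_mul] at y1
      have hpos : 0 < (k + 1) * δ := Nat.mul_pos (by omega) (by omega)
      have : (δ + N) = 2 * N := by
        apply Nat.eq_of_mul_eq_mul_right hpos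
        rw [y1]; ring
      omega
end

section
/- Let G be a k-connected graph (k ≥ 1) with n ≥ 9 vertices and e edges, minimum degree δ, and maximum degree Δ. If the first Zagreb index satisfies M₁(G) ≥ (n − k − 2)Δ² + (e(δ + n − k − 2))² / (4δ(n − k − 2)(k + 2)), then G is traceable or G is the complete bipartite graph K_{k, k+2}. -/
open Finset

/-- `G` is traceable: it has a Hamiltonian path. -/
def IsTraceable {V : Type*} [DecidableEq V] (G : SimpleGraph V) : Prop :=
  ∃ (u v : V) (p : G.Walk u v), p.IsHamiltonian

lemma aux_opt {V : Type*} {P : V → V → Prop} {C : V → Prop} {c : V} (hc : C c) (o : Option V)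
    (h : ∀ x ∈ o, ∃ a, C a ∧ P a x) : ∃ a, C a ∧ ∀ x ∈ o, P a x := by
  cases o with
  | none => exact ⟨c, hc, by simp⟩
  | some x =>
    obtain ⟨a, ha, hx⟩ := h x rfl
    exact ⟨a, ha, by simpa using hx⟩

/-- Splicing a detour through `C` into a rearranged longest path is impossible. -/
lemma aux_splice {V : Type*} (G : SimpleGraph V) (l : List V)
    (hnd : l.Nodup)
    (hmax : ∀ l' : List V, l'.IsChain G.Adj → l'.Nodup → l'.length ≤ l.length)
    (C : V → Prop) (c : V) (hc : C c)
    (hC : ∀ a b, C a → C b → ∃ q : List V, q.IsChain G.Adj ∧ q.Nodup ∧ q.head? = some a ∧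
      q.getLast? = some b ∧ ∀ x ∈ q, x ∉ l)
    (A D : List V) (hp : (A ++ D).Perm l) (hAc : A.IsChain G.Adj) (hDc : D.IsChain G.Adj)
    (hA : ∀ x ∈ A.getLast?, ∃ a, C a ∧ G.Adj a x)
    (hD : ∀ x ∈ D.head?, ∃ a, C a ∧ G.Adj a x) : False := by
  obtain ⟨a, ha, hax⟩ := aux_opt hc _ hA
  obtain ⟨d, hd, hdx⟩ := aux_opt hc _ hD
  obtain ⟨q, q1, q2, q3, q4, q5⟩ := hC a d ha hd
  have hq : q ≠ [] := by rintro rfl; simp at q3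
  have hlen := hp.length_eq
  have hpd : (A ++ D).Nodup := hp.nodup_iff.2 hnd
  have hmem : ∀ x, x ∈ A ++ D ↔ x ∈ l := fun x => hp.mem_iff
  have := hmax (A ++ (q ++ D)) ?_ ?_
  · have := List.length_pos_iff.2 hq
    simp at *
    omega
  · rw [List.isChain_append, List.isChain_append]
    refine ⟨hAc, ⟨q1, hDc, ?_⟩, ?_⟩
    · intro x hx y hy
      rw [q4] at hx
      cases hx
      exact hdx y hy
    · intro x hx y hy
      rw [List.head?_append, q3] at hy
      simp at hy
      subst hy
      exact (hax x hx).symm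
  · simp only [List.nodup_append] at *
    grind

lemma aux_traceable {V : Type*} [Nonempty V] [DecidableEq V] (G : SimpleGraph V) (l : List V)
    (hch : l.IsChain G.Adj) (hnd : l.Nodup) (hall : ∀ v, v ∈ l) : IsTraceable G := by
  have hne : l ≠ [] := List.ne_nil_of_mem (hall (Classical.arbitrary V))
  refine ⟨_, _, SimpleGraph.Walk.ofSupport l hne hch, ?_⟩
  intro a
  rw [SimpleGraph.Walk.support_ofSupport]
  exact List.count_eq_one_of_mem hnd (hall a)

lemma aux_longest {V : Type*} [Fintype V] (G : SimpleGraph V) :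
    ∃ l : List V, l.IsChain G.Adj ∧ l.Nodup ∧
      ∀ l' : List V, l'.IsChain G.Adj → l'.Nodup → l'.length ≤ l.length := by
  classical
  let P : ℕ → Prop := fun m => ∃ l : List V, l.IsChain G.Adj ∧ l.Nodup ∧ l.length = m
  have h0 : P 0 := ⟨[], by simp, by simp, rfl⟩
  obtain ⟨l, h1, h2, h3⟩ := Nat.findGreatest_spec (P := P) (Nat.zero_le (Fintype.card V)) h0
  refine ⟨l, h1, h2, fun l' h1' h2' => ?_⟩
  rw [h3]
  exact Nat.le_findGreatest h2'.length_le_card ⟨l', h1', h2', rfl⟩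

/-- Chvatal-Erdos, path version. -/
theorem aux_CE {V : Type*} [Fintype V] [DecidableEq V] [Nonempty V] (G : SimpleGraph V) (k : ℕ)
    (hconn : KConnected k G) (hnt : ¬ IsTraceable G) :
    ∃ I : Finset V, I.card = k + 2 ∧ ∀ x ∈ I, ∀ y ∈ I, ¬ G.Adj x y := by
  classical
  obtain ⟨l, hch, hnd, hmax⟩ := aux_longest G
  have : ∃ c, c ∉ l := by
    by_contra! h
    exact hnt (aux_traceable G l hch hnd h)
  obtain ⟨c, hcl⟩ := this
  let H : SimpleGraph V :=
    { Adj := fun x y => G.Adj x y ∧ x ∉ l ∧ y ∉ l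
      symm := ⟨fun x y h => ⟨h.1.symm, h.2.2, h.2.1⟩⟩
      loopless := ⟨fun x h => G.loopless.1 x h.1⟩ }
  let C : V → Prop := fun x => H.Reachable c x
  have hc : C c := SimpleGraph.Reachable.refl c
  have hCl : ∀ x, C x → x ∉ l := by
    intro x hx
    obtain ⟨p⟩ := hx.symm
    cases p with
    | nil => exact hcl
    | cons h p => exact h.2.1
  have hC : ∀ a b, C a → C b → ∃ q : List V, q.IsChain G.Adj ∧ q.Nodup ∧ q.head? = some a ∧
      q.getLast? = some b ∧ ∀ x ∈ q, x ∉ l := by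
    intro a b ha hb
    obtain ⟨p, hp⟩ := (ha.symm.trans hb).exists_isPath
    refine ⟨p.support, p.isChain_adj_support.imp (fun _ _ h => h.1), hp.support_nodup, ?_, ?_, ?_⟩
    · rw [List.head?_eq_some_head p.support_ne_nil]; simp
    · rw [List.getLast?_eq_some_getLast p.support_ne_nil]; simp
    · intro x hx
      exact hCl x (ha.trans ⟨p.takeUntil x hx⟩)
  have key := aux_splice G l hnd hmax C c hc hC
  let N : V → Prop := fun x => ∃ a, C a ∧ G.Adj a x
  have hlpos : 0 < l.length := by
    have := hmax [c] (by simp) (by simp)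
    simp at this; omega
  -- indices
  let J : Finset ℕ := (Finset.range l.length).filter (fun i => ∃ h : i < l.length, N l[i])
  have hJlast : ∀ i ∈ J, i + 1 < l.length := by
    intro i hi
    simp only [J, Finset.mem_filter, Finset.mem_range] at hi
    obtain ⟨hi, h, hN⟩ := hi
    by_contra hcon
    have : i = l.length - 1 := by omega
    subst this
    refine key l [] (by simp) hch (by simp) ?_ (by simp)
    intro x hx
    rw [List.getLast?_eq_getElem?, List.getElem?_eq_getElem h] at hx
    cases hx
    exact hN
  let J' : Finset ℕ := insert 0 (J.image (· + 1))
  have hJ'lt : ∀ j ∈ J', j < l.length := by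
    intro j hj
    simp only [J', Finset.mem_insert, Finset.mem_image] at hj
    rcases hj with rfl | ⟨i, hi, rfl⟩
    · exact hlpos
    · exact hJlast i hi
  have hJ'take : ∀ j ∈ J', ∀ x ∈ (l.take j).getLast?, ∃ a, C a ∧ G.Adj a x := by
    intro j hj x hx
    simp only [J', Finset.mem_insert, Finset.mem_image] at hj
    rcases hj with rfl | ⟨i, hi, rfl⟩
    · simp at hx
    · simp only [J, Finset.mem_filter, Finset.mem_range] at hi
      obtain ⟨hi, h, hN⟩ := hi
      rw [List.getLast?_take] at hx
      simp [h] at hx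
      subst hx
      exact hN
  have hnotN : ∀ j ∈ J', ∀ h : j < l.length, ¬ N l[j] := by
    intro j hj h hN
    refine key (l.take j) (l.drop j) (by simp) (hch.take j) (hch.drop j) (hJ'take j hj) ?_
    intro x hx
    rw [List.head?_drop, List.getElem?_eq_getElem h] at hx
    cases hx
    exact hN
  have hind : ∀ i ∈ J', ∀ j ∈ J', i < j → ∀ hi : i < l.length, ∀ hj : j < l.length,
      ¬ G.Adj l[i] l[j] := by
    intro i hi j hj hij hil hjl hadj
    have hB : (l.take j).drop i ≠ [] := by
      intro h
      have := congrArg List.length h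
      simp at this
      omega
    have e1 : l.take i = (l.take j).take i := by
      rw [List.take_take, min_eq_left hij.le]
    refine key (l.take i) (((l.take j).drop i).reverse ++ l.drop j) ?_ (hch.take i) ?_
      (hJ'take i hi) ?_
    · calc (l.take i ++ (((l.take j).drop i).reverse ++ l.drop j)).Perm
            (l.take i ++ (((l.take j).drop i) ++ l.drop j)) := by
              apply List.Perm.append_left
              apply List.Perm.append_right
              exact List.reverse_perm _
        _ = l := by
              rw [← List.append_assoc, e1, List.take_append_drop, List.take_append_drop]
    · rw [List.isChain_append]
      refine ⟨?_, hch.drop j, ?_⟩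
      · rw [List.isChain_reverse]
        exact ((hch.take j).drop i).imp (fun _ _ h => h.symm)
      · intro x hx y hy
        rw [List.getLast?_reverse, List.head?_drop, List.getElem?_take] at hx
        rw [List.head?_drop, List.getElem?_eq_getElem hjl] at hy
        simp [hij, hil] at hx hy
        subst hx hy
        exact hadj
    · intro x hx
      apply hJ'take j hj x
      rw [List.head?_append_of_ne_nil _ (by simpa using hB), List.head?_reverse] at hx
      rw [← List.take_append_drop i (l.take j), List.getLast?_append_of_ne_nil _ hB]
      exact hx
  -- the number of attachment vertices
  have hJcard : k ≤ J.card := by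
    by_contra hcon
    push Not at hcon
    let S : Finset V := Finset.univ.filter (fun x => x ∈ l ∧ N x)
    have hS : S.card ≤ J.card := by
      refine Finset.card_le_card_of_injOn (fun x => l.idxOf x) ?_ ?_
      · intro x hx
        simp only [S, Finset.coe_filter, Set.mem_ofPred_eq, Finset.mem_univ, true_and] at hx
        have h := List.idxOf_lt_length_iff.2 hx.1
        simp only [J, Finset.coe_filter, Set.mem_ofPred_eq, Finset.mem_range]
        refine ⟨h, h, ?_⟩
        simpa using hx.2
      · intro x hx y hy hxy
        simp only [S, Finset.coe_filter, Set.mem_ofPred_eq, Finset.mem_univ, true_and] at hx hy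
        exact (List.idxOf_inj hx.1).1 hxy
    have hcn := hconn.2 S (by omega)
    have h0 : ¬ N l[0] := hnotN 0 (by simp [J']) hlpos
    have hcS : c ∈ ((S : Set V)ᶜ) := by simp [S, hcl]
    have h0S : l[0] ∈ ((S : Set V)ᶜ) := by simp [S, h0]
    have hstep : ∀ (x y : ((S : Set V)ᶜ : Set V)), (G.induce ((S : Set V)ᶜ)).Walk x y →
        C x → C y := by
      intro x y p
      induction p with
      | nil => exact id
      | @cons u v w h p ih =>
        intro hu
        apply ih
        have hadj : G.Adj u v := h
        have hv := v.2
        simp only [S, Set.mem_compl_iff, Finset.coe_filter, Set.mem_ofPred_eq, Finset.mem_univ,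
          true_and, not_and] at hv
        have hvl : (v : V) ∉ l := fun hl => hv hl ⟨u, hu, hadj⟩
        have hH : H.Adj u v := ⟨hadj, hCl _ hu, hvl⟩
        exact SimpleGraph.Reachable.trans hu hH.reachable
    obtain ⟨p⟩ := hcn.preconnected ⟨c, hcS⟩ ⟨l[0], h0S⟩
    exact hCl _ (hstep _ _ p hc) (by simp)
  have hJ'card : J'.card = J.card + 1 := by
    rw [Finset.card_insert_of_notMem (by simp), Finset.card_image_of_injective _
      (add_left_injective 1)]
  let f : ℕ → V := fun j => l.getD j c
  have hf : ∀ j (h : j < l.length), f j = l[j] := fun j h => by simp [f, h]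
  let T : Finset V := insert c (J'.image f)
  have hTcard : T.card = J.card + 2 := by
    rw [Finset.card_insert_of_notMem, Finset.card_image_of_injOn, hJ'card]
    · intro i hi j hj hij
      have hi' := hJ'lt i hi
      have hj' := hJ'lt j hj

      rw [hf i hi', hf j hj'] at hij
      exact (hnd.getElem_inj_iff).1 hij
    · intro h
      obtain ⟨j, hj, hjc⟩ := Finset.mem_image.1 h
      rw [hf j (hJ'lt j hj)] at hjc
      exact hcl (hjc ▸ List.getElem_mem _)
  have hcj : ∀ j ∈ J', ¬ G.Adj c (f j) := by
    intro j hj h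
    rw [hf j (hJ'lt j hj)] at h
    exact hnotN j hj (hJ'lt j hj) ⟨c, hc, h⟩
  have hTind : ∀ x ∈ T, ∀ y ∈ T, ¬ G.Adj x y := by
    intro x hx y hy hadj
    simp only [T, Finset.mem_insert, Finset.mem_image] at hx hy
    rcases hx with rfl | ⟨i, hi, rfl⟩ <;> rcases hy with rfl | ⟨j, hj, rfl⟩
    · exact G.loopless.1 _ hadj
    · exact hcj j hj hadj
    · exact hcj i hi hadj.symm
    · have hi' := hJ'lt i hi
      have hj' := hJ'lt j hj
      rw [hf i hi', hf j hj'] at hadj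
      rcases lt_trichotomy i j with h | h | h
      · exact hind i hi j hj h _ _ hadj
      · subst h
        exact G.loopless.1 _ hadj
      · exact hind j hj i hi h _ _ hadj.symm
  obtain ⟨I, hIT, hI⟩ := Finset.exists_subset_card_eq (show k + 2 ≤ T.card by omega)
  exact ⟨I, hI, fun x hx y hy => hTind x (hIT hx) y (hIT hy)⟩

lemma aux_interleave {V : Type*} (G : SimpleGraph V) : ∀ (m : ℕ) (A B : List V),
    A.length + B.length = m → (A.length = B.length ∨ A.length = B.length + 1) →
    (∀ a ∈ A, ∀ b ∈ B, G.Adj a b) →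
    ∃ l : List V, l.Perm (A ++ B) ∧ l.IsChain G.Adj ∧ ∀ x ∈ l.head?, x ∈ A := by
  intro m
  induction m with
  | zero =>
    intro A B h _ _
    have hA : A = [] := List.length_eq_zero_iff.1 (by omega)
    have hB : B = [] := List.length_eq_zero_iff.1 (by omega)
    subst hA hB
    exact ⟨[], by simp, by simp, by simp⟩
  | succ m ih =>
    intro A B h hlen hadj
    cases A with
    | nil => simp at h hlen; omega
    | cons a A =>
      simp at h hlen
      obtain ⟨l, h1, h2, h3⟩ := ih B A (by omega) (by omega)
        (fun b hb x hx => (hadj x (by simp [hx]) b hb).symm)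
      refine ⟨a :: l, ?_, ?_, by simp⟩
      · exact (h1.trans List.perm_append_comm).cons a
      · rw [List.isChain_cons]
        exact ⟨fun y hy => hadj a (by simp) y (h3 y hy), h2⟩

lemma aux_minDegree {V : Type*} [Fintype V] [DecidableEq V] (G : SimpleGraph V)
    [DecidableRel G.Adj] (k : ℕ) (hconn : KConnected k G) (v : V) : k ≤ G.degree v := by
  by_contra hcon
  push Not at hcon
  have h := hconn.2 (G.neighborFinset v) (by simpa using hcon)
  have hcard : (insert v (G.neighborFinset v)).card < Fintype.card V := by
    have := Finset.card_insert_le v (G.neighborFinset v)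
    have h1 := hconn.1
    rw [SimpleGraph.card_neighborFinset_eq_degree] at this
    omega
  obtain ⟨w, hw⟩ : ∃ w, w ∉ insert v (G.neighborFinset v) := by
    by_contra! hall
    rw [Finset.eq_univ_iff_forall.2 hall] at hcard
    simp at hcard
  simp only [Finset.mem_insert, SimpleGraph.mem_neighborFinset, not_or] at hw
  obtain ⟨p⟩ := h.preconnected ⟨v, by simp⟩ ⟨w, by simpa using hw.2⟩
  cases p with
  | nil => exact hw.1 rfl
  | @cons _ u _ hadj p =>
    have := u.2
    simp at this
    exact this hadj

lemma aux_iso {V : Type*} [Fintype V] [DecidableEq V] (G : SimpleGraph V) (I : Finset V) (k : ℕ)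
    (hI : I.card = k + 2) (hW : Iᶜ.card = k)
    (hadj : ∀ x y, G.Adj x y ↔ ((x ∈ I ∧ y ∉ I) ∨ (x ∉ I ∧ y ∈ I))) :
    Nonempty (G ≃g completeBipartiteGraph (Fin k) (Fin (k + 2))) := by
  classical
  have e1 : {x // x ∉ I} ≃ Fin k := Fintype.equivFinOfCardEq (by
    rw [Fintype.card_subtype, ← hW]; congr 1; ext; simp)
  have e2 : {x // ¬ x ∉ I} ≃ Fin (k + 2) := Fintype.equivFinOfCardEq (by
    rw [Fintype.card_subtype, ← hI]; congr 1; ext; simp)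
  let e : V ≃ Fin k ⊕ Fin (k + 2) :=
    (Equiv.sumCompl (fun x => x ∉ I)).symm.trans (Equiv.sumCongr e1 e2)
  have hl : ∀ x, (e x).isLeft = true ↔ x ∉ I := by
    intro x
    by_cases hx : x ∈ I <;> simp [e, Equiv.sumCompl, hx]
  have hr : ∀ x, (e x).isRight = true ↔ x ∈ I := by
    intro x
    by_cases hx : x ∈ I <;> simp [e, Equiv.sumCompl, hx]
  refine ⟨⟨e, ?_⟩⟩
  intro x y
  rw [hadj]
  simp only [completeBipartiteGraph_adj, hl, hr]
  tauto

/-- Degree sums over an independent set versus its complement. -/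
lemma aux_count {V : Type*} [Fintype V] [DecidableEq V] (G : SimpleGraph V) [DecidableRel G.Adj]
    (I : Finset V) (hI : ∀ x ∈ I, ∀ y ∈ I, ¬ G.Adj x y) :
    ∑ x ∈ I, G.degree x = ∑ y ∈ Iᶜ, (I.filter (fun x => G.Adj x y)).card := by
  have := Finset.sum_card_bipartiteAbove_eq_sum_card_bipartiteBelow (s := I) (t := Iᶜ) G.Adj
  simp only [Finset.bipartiteAbove, Finset.bipartiteBelow] at this
  rw [← this]
  refine Finset.sum_congr rfl fun x hx => ?_
  rw [← SimpleGraph.card_neighborFinset_eq_degree]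
  congr 1
  ext y
  simp only [SimpleGraph.mem_neighborFinset, Finset.mem_filter, Finset.mem_compl]
  exact ⟨fun h => ⟨fun hy => hI x hx y hy h, h⟩, fun h => h.2⟩

/-- The arithmetic of the equality case. -/
lemma aux_arith (k m M D : ℕ) (hk : 1 ≤ k) (hkm : k ≤ m) (hmM : m < M) (hMD : M ≤ D)
    (hD : D ≤ k + 2) (h9 : 9 ≤ M + k + 2) (h : (m + M) * D = 2 * (k + 2) * m) : False := by
  obtain rfl | rfl : m = k ∨ m = k + 1 := by omega
  · obtain rfl | rfl : M = m + 1 ∨ M = m + 2 := by omega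
    · obtain rfl | rfl : D = m + 1 ∨ D = m + 2 := by omega
      · have : m = 1 := by nlinarith
        omega
      · nlinarith
    · obtain rfl : D = m + 2 := by omega
      nlinarith
  · obtain rfl : M = k + 2 := by omega
    obtain rfl : D = k + 2 := by omega
    nlinarith

lemma aux_main
    {V : Type*} [Fintype V] [DecidableEq V]
    (G : SimpleGraph V) [DecidableRel G.Adj]
    (k M e δ Δ : ℕ) (hk : 1 ≤ k) (hkδ : k ≤ δ) (hδM : δ ≤ M)
    (h9 : 9 ≤ M + k + 2) (he : e = G.edgeFinset.card)
    (hδ : ∀ v, δ ≤ G.degree v) (hΔ : ∀ v, G.degree v ≤ Δ)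
    (I : Finset V) (hIc : I.card = k + 2) (hI : ∀ x ∈ I, ∀ y ∈ I, ¬ G.Adj x y)
    (hW : Iᶜ.card = M) (hdI : ∀ x ∈ I, G.degree x ≤ M)
    (hM : ((∑ v, (G.degree v) ^ 2 : ℕ) : ℝ) ≥
      (M : ℝ) * Δ ^ 2 +
        ((e : ℝ) * ((δ : ℝ) + M)) ^ 2 / (4 * δ * (M : ℝ) * (k + 2))) :
    M ≤ k + 2 ∧ ∀ x y, G.Adj x y ↔ ((x ∈ I ∧ y ∉ I) ∨ (x ∉ I ∧ y ∈ I)) := by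
  have hcount := aux_count G I hI
  have hle : ∀ y, (I.filter (fun x => G.Adj x y)).card ≤ G.degree y := by
    intro y
    rw [← SimpleGraph.card_neighborFinset_eq_degree]
    apply Finset.card_le_card
    intro x hx
    simpa using (Finset.mem_filter.1 hx).2.symm
  have hSW : ∑ x ∈ I, G.degree x ≤ ∑ y ∈ Iᶜ, G.degree y := by
    rw [hcount]; exact Finset.sum_le_sum fun y _ => hle y
  have hsum : ∑ x ∈ I, G.degree x + ∑ y ∈ Iᶜ, G.degree y = 2 * e := by
    rw [Finset.sum_add_sum_compl, G.sum_degrees_eq_twice_card_edges, he]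
  have hSe : ∑ x ∈ I, G.degree x ≤ e := by omega
  have hW2 : ∑ y ∈ Iᶜ, G.degree y ^ 2 ≤ M * Δ ^ 2 := by
    rw [← hW, ← smul_eq_mul]
    exact Finset.sum_le_card_nsmul _ _ _ fun y _ => Nat.pow_le_pow_left (hΔ y) 2
  rw [← Finset.sum_add_sum_compl I] at hM
  -- real analysis
  have hT : ∑ x ∈ I, (((G.degree x : ℝ) - δ) * (M - G.degree x)) =
      (δ + M) * ((∑ x ∈ I, G.degree x : ℕ) : ℝ) - (k + 2) * δ * M
        - ((∑ x ∈ I, G.degree x ^ 2 : ℕ) : ℝ) := by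
    push_cast
    rw [Finset.mul_sum]
    have : ((k : ℝ) + 2) * δ * M = ∑ x ∈ I, (δ : ℝ) * M := by
      rw [Finset.sum_const, hIc, nsmul_eq_mul]; push_cast; ring
    rw [this, ← Finset.sum_sub_distrib, ← Finset.sum_sub_distrib]
    exact Finset.sum_congr rfl fun x _ => by ring
  have hTnn : ∀ x ∈ I, 0 ≤ (((G.degree x : ℝ) - δ) * (M - G.degree x)) := by
    intro x hx
    have h1 : (δ : ℝ) ≤ G.degree x := by exact_mod_cast hδ x
    have h2 : (G.degree x : ℝ) ≤ M := by exact_mod_cast hdI x hx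
    exact mul_nonneg (by linarith) (by linarith)
  have hT0 := Finset.sum_nonneg hTnn
  have hT00 := (Finset.sum_eq_zero_iff_of_nonneg hTnn).1
  rw [hT] at hT0 hT00
  have hδpos : (0 : ℝ) < δ := by exact_mod_cast (by omega : 0 < δ)
  have hMpos : (0 : ℝ) < M := by exact_mod_cast (by omega : 0 < M)
  have hkpos : (0 : ℝ) < (k : ℝ) + 2 := by positivity
  have hSe' : ((∑ x ∈ I, G.degree x : ℕ) : ℝ) ≤ e := by exact_mod_cast hSe
  have hW2' : ((∑ y ∈ Iᶜ, G.degree y ^ 2 : ℕ) : ℝ) ≤ M * Δ ^ 2 := by exact_mod_cast hW2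
  have hS0 : (0 : ℝ) ≤ ((∑ x ∈ I, G.degree x : ℕ) : ℝ) := by positivity
  rw [Nat.cast_add] at hM
  set S : ℝ := ((∑ x ∈ I, G.degree x : ℕ) : ℝ) with hSdef
  set Q : ℝ := ((∑ x ∈ I, G.degree x ^ 2 : ℕ) : ℝ)
  set R : ℝ := ((∑ y ∈ Iᶜ, G.degree y ^ 2 : ℕ) : ℝ) with hRdef
  set Y : ℝ := (k + 2) * δ * M with hY
  have hYpos : 0 < Y := by positivity
  have hden : 4 * (δ : ℝ) * M * (k + 2) = 4 * Y := by rw [hY]; ring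
  rw [hden] at hM
  set F : ℝ := ((e : ℝ) * ((δ : ℝ) + M)) ^ 2 / (4 * Y) with hF
  have hFeq : F * (4 * Y) = ((e : ℝ) * ((δ : ℝ) + M)) ^ 2 := by
    rw [hF]; field_simp
  have hXX : ((δ + M) * S) ^ 2 ≤ ((e : ℝ) * ((δ : ℝ) + M)) ^ 2 := by
    apply pow_le_pow_left₀ (by positivity)
    rw [mul_comm]
    exact mul_le_mul_of_nonneg_right hSe' (by positivity)
  have hFQ : F ≤ Q := by linarith
  have hQX : Q ≤ (δ + M) * S - Y := by linarith
  have hlow : ((δ + M) * S - Y) * (4 * Y) ≤ ((δ + M) * S) ^ 2 := by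
    nlinarith [sq_nonneg ((δ + M) * S - 2 * Y)]
  have hXF : (δ + M) * S - Y ≤ F := by
    have : ((δ + M) * S - Y) * (4 * Y) ≤ F * (4 * Y) := by rw [hFeq]; exact hlow.trans hXX
    exact le_of_mul_le_mul_right this (by positivity)
  have hR : R = M * Δ ^ 2 := by linarith
  have hFX : F = (δ + M) * S - Y := by linarith
  have hX2 : (δ + M) * S = 2 * Y := by
    have : ((δ + M) * S - 2 * Y) ^ 2 ≤ 0 := by
      rw [hFX] at hFeq
      nlinarith
    have := pow_eq_zero_iff (two_ne_zero) |>.1 (le_antisymm this (sq_nonneg _))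
    linarith
  have hSeq : S = e := by
    have h1 : ((e : ℝ) * ((δ : ℝ) + M)) ^ 2 = ((δ + M) * S) ^ 2 := by
      rw [← hFeq, hFX, hX2]; ring
    have h2 := (pow_left_inj₀ (by positivity) (by positivity) two_ne_zero).1 h1
    have h3 : (δ : ℝ) + M ≠ 0 := by positivity
    have : ((δ : ℝ) + M) * e = (δ + M) * S := by linarith
    exact (mul_left_cancel₀ h3 this).symm
  have hdeg : ∀ x ∈ I, G.degree x = δ ∨ G.degree x = M := by
    intro x hx
    rcases mul_eq_zero.1 (hT00 (by linarith) x hx) with h | h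
    · left; exact_mod_cast sub_eq_zero.1 h
    · right; exact_mod_cast (sub_eq_zero.1 h).symm
  -- back to naturals
  have hSe2 : ∑ x ∈ I, G.degree x = e := by rw [hSdef] at hSeq; exact_mod_cast hSeq
  have hX2' : (δ + M) * e = 2 * ((k + 2) * δ * M) := by
    rw [hSeq, hY] at hX2; exact_mod_cast hX2
  have hR' : ∑ y ∈ Iᶜ, G.degree y ^ 2 = M * Δ ^ 2 := by
    rw [hRdef] at hR; exact_mod_cast hR
  have hWdeg : ∀ y ∈ Iᶜ, G.degree y = Δ := by
    have h1 : ∑ y ∈ Iᶜ, G.degree y ^ 2 = ∑ y ∈ Iᶜ, Δ ^ 2 := by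
      rw [hR', Finset.sum_const, hW, smul_eq_mul]
    have h2 := (Finset.sum_eq_sum_iff_of_le
      (fun y _ => Nat.pow_le_pow_left (hΔ y) 2)).1 h1
    intro y hy
    exact Nat.pow_left_injective (n := 2) (by norm_num) (h2 y hy)
  have hWI : ∀ y ∈ Iᶜ, (I.filter (fun x => G.Adj x y)).card = G.degree y :=
    (Finset.sum_eq_sum_iff_of_le (fun y _ => hle y)).1 (by rw [← hcount]; omega)
  have hWnb : ∀ y ∈ Iᶜ, ∀ x, G.Adj y x → x ∈ I := by
    intro y hy x hx
    have : I.filter (fun x => G.Adj x y) = G.neighborFinset y := by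
      apply Finset.eq_of_subset_of_card_le
      · intro x hx
        simpa using (Finset.mem_filter.1 hx).2.symm
      · rw [SimpleGraph.card_neighborFinset_eq_degree, hWI y hy]
    have h2 : x ∈ G.neighborFinset y := by simpa using hx
    rw [← this] at h2
    exact (Finset.mem_filter.1 h2).1
  have heM : e = M * Δ := by
    have : ∑ y ∈ Iᶜ, G.degree y = M * Δ := by
      rw [Finset.sum_congr rfl hWdeg, Finset.sum_const, hW, smul_eq_mul]
    omega
  have hMpos' : 0 < M := by omega
  have hΔk : Δ ≤ k + 2 := by
    obtain ⟨y, hy⟩ := Finset.card_pos.1 (by omega : 0 < Iᶜ.card)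
    rw [← hWdeg y hy, ← hWI y hy, ← hIc]
    exact Finset.card_le_card (Finset.filter_subset _ _)
  have hΔeq : (δ + M) * Δ = 2 * (k + 2) * δ := by
    rw [heM] at hX2'
    apply Nat.eq_of_mul_eq_mul_left hMpos'
    linarith
  have hδeq : δ = M := by
    by_cases h : ∃ x ∈ I, G.degree x = M
    · obtain ⟨x, hx, hxM⟩ := h
      by_contra hne
      exact aux_arith k δ M Δ hk hkδ (by omega) (hxM ▸ hΔ x) hΔk h9 hΔeq
    · push Not at h
      have h1 : ∀ x ∈ I, G.degree x = δ := fun x hx => (hdeg x hx).resolve_right (h x hx)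
      have h2 : e = (k + 2) * δ := by
        rw [← hSe2, Finset.sum_congr rfl h1, Finset.sum_const, hIc, smul_eq_mul]
      rw [h2] at hX2'
      have h3 : ((k + 2) * δ) * (δ + M) = ((k + 2) * δ) * (2 * M) := by linarith
      have := Nat.eq_of_mul_eq_mul_left (by positivity [(by omega : 0 < δ)]) h3
      omega
  have hInb : ∀ x ∈ I, ∀ y, y ∉ I → G.Adj x y := by
    intro x hx y hy
    have : G.neighborFinset x = Iᶜ := by
      apply Finset.eq_of_subset_of_card_le
      · intro z hz
        simp only [SimpleGraph.mem_neighborFinset] at hz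
        simp only [Finset.mem_compl]
        exact fun h => hI x hx z h hz
      · rw [SimpleGraph.card_neighborFinset_eq_degree, hW]
        have := hδ x
        omega
    have h2 : y ∈ G.neighborFinset x := by rw [this]; simpa using hy
    simpa using h2
  refine ⟨?_, fun x y => ⟨fun h => ?_, ?_⟩⟩
  · obtain ⟨x, hx⟩ := Finset.card_pos.1 (by omega : 0 < I.card)
    have h1 := hδ x
    have h2 := hΔ x
    omega
  · by_cases hx : x ∈ I
    · exact Or.inl ⟨hx, fun hy => hI x hx y hy h⟩
    · exact Or.inr ⟨hx, hWnb x (by simpa using hx) y h⟩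
  · rintro (⟨hx, hy⟩ | ⟨hx, hy⟩)
    · exact hInb x hx y hy
    · exact (hInb y hy x hx).symm

theorem zagreb_traceable
    {V : Type*} [Fintype V] [DecidableEq V] [Nonempty V]
    (G : SimpleGraph V) [DecidableRel G.Adj]
    (k n e δ Δ : ℕ) (hk : 1 ≤ k) (hconn : KConnected k G)
    (hn : n = Fintype.card V) (hn9 : 9 ≤ n) (he : e = G.edgeFinset.card)
    (hδ : δ = G.minDegree) (hΔ : Δ = G.maxDegree)
    (hM : ((∑ v, (G.degree v) ^ 2 : ℕ) : ℝ) ≥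
      ((n : ℝ) - k - 2) * Δ ^ 2 +
        ((e : ℝ) * ((δ : ℝ) + n - k - 2)) ^ 2 / (4 * δ * ((n : ℝ) - k - 2) * (k + 2))) :
    IsTraceable G ∨ Nonempty (G ≃g completeBipartiteGraph (Fin k) (Fin (k + 2))) := by
  by_cases htr : IsTraceable G
  · exact Or.inl htr
  obtain ⟨I, hIc, hI⟩ := aux_CE G k hconn htr
  have hcompl : Iᶜ.card = n - (k + 2) := by rw [Finset.card_compl, hIc, hn]
  have hIn : k + 2 ≤ n := by rw [hn, ← hIc]; exact Finset.card_le_univ I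
  obtain ⟨M, hMn⟩ := Nat.exists_eq_add_of_le hIn
  have hW : Iᶜ.card = M := by omega
  have hdI : ∀ x ∈ I, G.degree x ≤ M := by
    intro x hx
    rw [← hW, ← SimpleGraph.card_neighborFinset_eq_degree]
    apply Finset.card_le_card
    intro z hz
    simp only [SimpleGraph.mem_neighborFinset] at hz
    simp only [Finset.mem_compl]
    exact fun h => hI x hx z h hz
  have hkδ : k ≤ δ := by
    rw [hδ]
    exact G.le_minDegree_of_forall_le_degree k (aux_minDegree G k hconn)
  have hδ' : ∀ v, δ ≤ G.degree v := fun v => hδ ▸ G.minDegree_le_degree v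
  have hΔ' : ∀ v, G.degree v ≤ Δ := fun v => hΔ ▸ G.degree_le_maxDegree v
  have hδM : δ ≤ M := by
    obtain ⟨x, hx⟩ := Finset.card_pos.1 (by omega : 0 < I.card)
    exact (hδ' x).trans (hdI x hx)
  have hcast : (n : ℝ) - k - 2 = M := by rw [hMn]; push_cast; ring
  have hcast2 : (δ : ℝ) + n - k - 2 = δ + M := by rw [← hcast]; ring
  rw [hcast2, hcast] at hM
  obtain ⟨hMk, hadj⟩ := aux_main G k M e δ Δ hk hkδ hδM (by omega) he hδ' hΔ' I hIc hI hW hdI hM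
  by_cases hMeq : M = k
  · exact Or.inr (aux_iso G I k hIc (by omega) hadj)
  · exfalso
    obtain ⟨l, h1, h2, -⟩ := aux_interleave G _ I.toList Iᶜ.toList rfl
      (by simp only [Finset.length_toList]; omega)
      (fun a ha b hb => (hadj a b).2 (Or.inl ⟨by simpa using ha, by simpa using hb⟩))
    refine htr (aux_traceable G l h2 ?_ ?_)
    · rw [h1.nodup_iff, List.nodup_append]
      refine ⟨I.nodup_toList, Finset.nodup_toList _, ?_⟩
      intro a ha b hb hab
      subst hab
      simp at ha hb
      exact hb ha
    · intro v
      rw [h1.mem_iff]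
      by_cases hv : v ∈ I <;> simp [hv]
end

section
/- Let G be a 2-connected bipartite graph with bipartition (A, B), |A| ≥ |B|, such that every vertex in A has degree at least s and every vertex in B has degree at least t. Then G contains a cycle of length at least 2·min(|B|, s + t − 1, 2s − 2). -/
open Finset

section Helpers
variable {V : Type*} [DecidableEq V] {G : SimpleGraph V}

/-- `HP G S x y`: the vertex set `S` carries a path of `G` from `x` to `y` using all of `S`. -/
inductive HP (G : SimpleGraph V) : Finset V → V → V → Prop
  | single (x : V) : HP G {x} x x
  | cons {S : Finset V} {x y z : V} : HP G S y z → G.Adj x y → x ∉ S → HP G (insert x S) x z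

/-- `C` is the vertex set of a cycle. -/
def Cyc (G : SimpleGraph V) (C : Finset V) : Prop :=
  ∃ x y, HP G C x y ∧ G.Adj y x ∧ 3 ≤ C.card

theorem HP.left_mem {S : Finset V} {x y : V} (h : HP G S x y) : x ∈ S := by
  cases h <;> simp

theorem HP.right_mem {S : Finset V} {x y : V} (h : HP G S x y) : y ∈ S := by
  induction h with
  | single => simp
  | cons _ _ _ ih => simp [ih]

theorem HP.snoc {S : Finset V} {x y z : V} (h : HP G S x y) (hz : G.Adj y z) (hn : z ∉ S) :
    HP G (insert z S) x z := by
  induction h with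
  | single a =>
    have := HP.cons (HP.single z) hz (by simpa using hz.ne)
    rwa [Finset.pair_comm] at this
  | @cons S x y w h ha hx ih =>
    rw [Finset.mem_insert, not_or] at hn
    have := HP.cons (ih hz hn.2) ha (by simp [hx, Ne.symm hn.1])
    rwa [Finset.insert_comm] at this

theorem HP.symm {S : Finset V} {x y : V} (h : HP G S x y) : HP G S y x := by
  induction h with
  | single a => exact HP.single a
  | cons h ha hx ih => exact ih.snoc ha.symm hx

/-- glue at a common end -/
theorem HP.glue {S T : Finset V} {x y z : V} (h : HP G S x y) (h' : HP G T y z)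
    (hd : ∀ v, v ∈ S → v ∈ T → v = y) : HP G (S ∪ T) x z := by
  induction h with
  | single a =>
    have : {a} ∪ T = T := by
      have := h'.left_mem
      grind
    rwa [this]
  | @cons S x y w h ha hx ih =>
    rw [Finset.insert_union]
    refine HP.cons (ih h' (by grind)) ha ?_
    have := h.right_mem
    grind

theorem HP.concat {S T : Finset V} {x y z w : V} (h : HP G S x y) (h' : HP G T z w)
    (ha : G.Adj y z) (hd : Disjoint S T) : HP G (S ∪ T) x w := by
  have hy := h.right_mem
  have h1 := h.glue (HP.cons h' ha (Finset.disjoint_left.1 hd hy)) (by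
    intro v hv hv'
    have := Finset.disjoint_left.1 hd hv
    grind)
  have : S ∪ insert y T = S ∪ T := by grind
  rwa [this] at h1

theorem HP.split {S : Finset V} {x y z : V} (h : HP G S x y) (hz : z ∈ S) :
    ∃ S1 S2, HP G S1 x z ∧ HP G S2 z y ∧ S1 ∪ S2 = S ∧ S1 ∩ S2 = {z} := by
  induction h with
  | single a =>
    obtain rfl : z = a := by simpa using hz
    exact ⟨{z}, {z}, .single _, .single _, by simp, by simp⟩
  | @cons S x y w h ha hx ih =>
    by_cases hzx : z = x
    · subst hzx
      exact ⟨{z}, insert z S, .single _, .cons h ha hx, by grind, by grind⟩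
    · obtain ⟨S1, S2, h1, h2, h3, h4⟩ := ih (by grind)
      refine ⟨insert x S1, S2, .cons h1 ha (by grind), h2, by grind, ?_⟩
      ext v
      have := Finset.ext_iff.1 h4 v
      grind

/-- remove the first vertex -/
theorem HP.tail {S : Finset V} {x y : V} (h : HP G S x y) (hxy : x ≠ y) :
    ∃ S' x', HP G S' x' y ∧ G.Adj x x' ∧ x ∉ S' ∧ S = insert x S' := by
  cases h with
  | single => exact absurd rfl hxy
  | cons h ha hx => exact ⟨_, _, h, ha, hx, rfl⟩

theorem HP.edge {S C : Finset V} {x y : V} (h : HP G S x y) (hx : x ∉ C) (hy : y ∈ C) :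
    ∃ u ∈ S, ∃ v ∈ S, u ∉ C ∧ v ∈ C ∧ G.Adj u v := by
  induction h with
  | single => exact absurd hy hx
  | @cons S x y w h ha hxS ih =>
    by_cases hyC : y ∈ C
    · exact ⟨x, by simp, y, by simp [h.left_mem], hx, hyC, ha⟩
    · obtain ⟨u, hu, v, hv, h1⟩ := ih hyC hy
      exact ⟨u, by simp [hu], v, by simp [hv], h1⟩

theorem HP.walk {S : Finset V} {x y : V} (h : HP G S x y) :
    ∃ w : G.Walk x y, w.IsPath ∧ w.length + 1 = S.card ∧ w.support.toFinset = S := by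
  induction h with
  | single a => exact ⟨.nil, by simp, by simp, by simp⟩
  | @cons S x y w h ha hxS ih =>
    obtain ⟨p, hp, hl, hs⟩ := ih
    refine ⟨.cons ha p, ?_, ?_, ?_⟩
    · rw [SimpleGraph.Walk.cons_isPath_iff]
      exact ⟨hp, by rw [← hs] at hxS; simpa using hxS⟩
    · rw [Finset.card_insert_of_notMem hxS]; simp [hl]
    · simp [hs]

theorem Cyc.walk {C : Finset V} (h : Cyc G C) :
    ∃ (u : V) (c : G.Walk u u), c.IsCycle ∧ c.length = C.card := by
  obtain ⟨x, y, h, ha, hc⟩ := h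
  obtain ⟨w, hw, hl, -⟩ := h.walk
  refine ⟨y, .cons ha w, ?_, by simp [hl]⟩
  rw [SimpleGraph.Walk.cons_isCycle_iff]
  refine ⟨hw, fun he => ?_⟩
  cases w with
  | nil => simp at ha
  | cons h1 q =>
    rw [SimpleGraph.Walk.cons_isPath_iff] at hw
    rw [SimpleGraph.Walk.edges_cons, List.mem_cons] at he
    rcases he with he | he
    · simp only [Sym2.eq, Sym2.rel_iff', Prod.mk.injEq, Prod.swap_prod_mk] at he
      rcases he with ⟨rfl, -⟩ | ⟨rfl, -⟩
      · simp at ha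
      · cases q with
        | nil => simp at hl; omega
        | cons h2 r => simp at hw
    · exact hw.2 (SimpleGraph.Walk.snd_mem_support_of_mem_edges _ he)

/-- two paths with the same ends form a cycle -/
theorem HP.cyc {S T : Finset V} {x y : V} (h : HP G S x y) (h' : HP G T x y) (hxy : x ≠ y)
    (hd : ∀ v, v ∈ S → v ∈ T → v = x ∨ v = y) (hc : 3 ≤ S.card) : Cyc G (S ∪ T) := by
  obtain ⟨T', x', h1, ha, hx, rfl⟩ := h'.tail hxy
  have h2 := h.glue h1.symm (by grind)
  have : S ∪ T' = S ∪ insert x T' := by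
    have := h.left_mem
    grind
  rw [this] at h2
  exact ⟨x, x', h2, ha.symm, hc.trans (Finset.card_le_card (by grind))⟩

/-- a cycle opened at a given vertex -/
theorem Cyc.open_at {C : Finset V} {v : V} (h : Cyc G C) (hv : v ∈ C) :
    ∃ v', HP G C v' v ∧ G.Adj v v' := by
  obtain ⟨x, y, h, ha, hc⟩ := h
  by_cases hvy : v = y
  · subst hvy; exact ⟨x, h, ha⟩
  obtain ⟨S1, S2, h1, h2, h3, h4⟩ := h.split hv
  obtain ⟨S', v', h5, h6, h7, rfl⟩ := h2.tail hvy
  refine ⟨v', ?_, h6⟩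
  have := h5.concat h1 ha (by
    rw [Finset.disjoint_left]
    intro u hu hu'
    have := Finset.ext_iff.1 h4 u
    grind)
  have h8 : S' ∪ S1 = C := by
    have := h1.right_mem
    grind
  rwa [h8] at this

/-- indexing a path -/
theorem HP.index {S : Finset V} {x y : V} (h : HP G S x y) :
    ∃ (n : ℕ) (p : ℕ → V), n + 1 = S.card ∧ p 0 = x ∧ p n = y ∧
      (∀ i < n, G.Adj (p i) (p (i + 1))) ∧
      (∀ i ≤ n, ∀ j ≤ n, p i = p j → i = j) ∧ ∀ v, v ∈ S ↔ ∃ i ≤ n, p i = v := by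
  induction h with
  | single a => exact ⟨0, fun _ => a, by simp, rfl, rfl, by simp, by simp, by simp [eq_comm]⟩
  | @cons S x y w h ha hxS ih =>
    obtain ⟨n, p, h1, h2, h3, h4, h5, h6⟩ := ih
    refine ⟨n + 1, fun i => if i = 0 then x else p (i - 1), ?_, by simp, by simp [h3], ?_, ?_, ?_⟩
    · rw [Finset.card_insert_of_notMem hxS, h1]
    · rintro (_ | i) hi
      · simpa [h2] using ha
      · simpa using h4 i (by omega)
    · have hne : ∀ i ≤ n, p i ≠ x := fun i hi he => hxS ((h6 x).2 ⟨i, hi, he⟩)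
      rintro (_ | i) hi (_ | j) hj he
      · rfl
      · simp at he; exact absurd he.symm (hne j (by omega))
      · simp at he; exact absurd he (hne i (by omega))
      · simp at he; have := h5 i (by omega) j (by omega) he; omega
    · intro v
      rw [Finset.mem_insert, h6]
      constructor
      · rintro (rfl | ⟨i, hi, rfl⟩)
        · exact ⟨0, by simp⟩
        · exact ⟨i + 1, by omega, by simp⟩
      · rintro ⟨_ | i, hi, rfl⟩
        · simp
        · right; exact ⟨i, by omega, by simp⟩

/-- `p 0, …, p n` is a path -/
def IsP (G : SimpleGraph V) (p : ℕ → V) (n : ℕ) : Prop :=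
  (∀ i < n, G.Adj (p i) (p (i + 1))) ∧ (∀ i ≤ n, ∀ j ≤ n, p i = p j → i = j)

/-- segment of an indexed path -/
def seg (p : ℕ → V) (i j : ℕ) : Finset V := (Finset.Icc i j).image p

theorem mem_seg {p : ℕ → V} {i j : ℕ} {v : V} : v ∈ seg p i j ↔ ∃ k, i ≤ k ∧ k ≤ j ∧ p k = v := by
  simp [seg, and_assoc]

theorem IsP.mem_seg {p : ℕ → V} {n : ℕ} (h : IsP G p n) {i j k : ℕ} (hj : j ≤ n) (hk : k ≤ n) :
    p k ∈ seg p i j ↔ i ≤ k ∧ k ≤ j := by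
  rw [_root_.mem_seg]
  constructor
  · rintro ⟨l, h1, h2, h3⟩
    have := h.2 l (by omega) k hk h3
    omega
  · intro ⟨h1, h2⟩; exact ⟨k, h1, h2, rfl⟩

theorem IsP.card_seg {p : ℕ → V} {n : ℕ} (h : IsP G p n) {i j : ℕ} (hj : j ≤ n) :
    (seg p i j).card = j + 1 - i := by
  rw [seg, Finset.card_image_of_injOn, Nat.card_Icc]
  intro a ha b hb hab
  simp only [Finset.coe_Icc, Set.mem_Icc] at ha hb
  exact h.2 a (by omega) b (by omega) hab

theorem IsP.seg_hp {p : ℕ → V} {n : ℕ} (h : IsP G p n) {i j : ℕ} (hij : i ≤ j) (hj : j ≤ n) :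
    HP G (seg p i j) (p i) (p j) := by
  induction j, hij using Nat.le_induction with
  | base => simpa [seg] using HP.single (p i)
  | succ k hik ih =>
    have : seg p i (k + 1) = insert (p (k + 1)) (seg p i k) := by
      ext v
      simp only [_root_.mem_seg, Finset.mem_insert]
      constructor
      · rintro ⟨l, h1, h2, rfl⟩
        by_cases hl : l = k + 1
        · simp [hl]
        · right; exact ⟨l, h1, by omega, rfl⟩
      · rintro (rfl | ⟨l, h1, h2, rfl⟩)
        · exact ⟨k + 1, by omega, le_rfl, rfl⟩
        · exact ⟨l, h1, by omega, rfl⟩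
    rw [this]
    refine (ih (by omega)).snoc (h.1 k (by omega)) ?_
    rw [h.mem_seg (by omega) hj]
    omega


theorem HP.of_connected {s : Set V} (h : (G.induce s).Connected) {x y : V} (hx : x ∈ s)
    (hy : y ∈ s) : ∃ S, HP G S x y ∧ ∀ v ∈ S, v ∈ s := by
  obtain ⟨w⟩ := h.preconnected ⟨x, hx⟩ ⟨y, hy⟩
  suffices H : ∀ (a b : s), (G.induce s).Walk a b →
      ∃ S, HP G S a.1 b.1 ∧ ∀ v ∈ S, v ∈ s from H _ _ w
  intro a b w
  induction w with
  | @nil u => exact ⟨{u.1}, .single _, by simp⟩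
  | @cons u v w hadj q ih =>
    obtain ⟨S, hS, hs⟩ := ih
    have ha : G.Adj u.1 v.1 := hadj
    by_cases hu : u.1 ∈ S
    · obtain ⟨S1, S2, -, h2, h3, -⟩ := hS.split hu
      exact ⟨S2, h2, fun z hz => hs z (h3 ▸ Finset.mem_union_right _ hz)⟩
    · exact ⟨_, .cons hS ha hu, by
        intro z hz
        rcases Finset.mem_insert.1 hz with rfl | hz
        · exact u.2
        · exact hs z hz⟩

/-- a shortest connection between two sets avoiding `c` -/
theorem exists_jump (H2 : ∀ c x y : V, x ≠ c → y ≠ c → ∃ S, HP G S x y ∧ c ∉ S)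
    (Z Y : Finset V) (c x y : V) (hx : x ∈ Z) (hy : y ∈ Y) (hxc : x ≠ c) (hyc : y ≠ c) :
    ∃ J z y', HP G J z y' ∧ z ∈ Z ∧ y' ∈ Y ∧ c ∉ J ∧ (∀ v ∈ J, v ∈ Z → v = z) ∧
      (∀ v ∈ J, v ∈ Y → v = y') := by
  classical
  let Q : ℕ → Prop := fun k => ∃ J z y', HP G J z y' ∧ z ∈ Z ∧ y' ∈ Y ∧ c ∉ J ∧ J.card = k
  have hQ : ∃ k, Q k := by
    obtain ⟨S, hS, hc⟩ := H2 c x y hxc hyc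
    exact ⟨_, S, x, y, hS, hx, hy, hc, rfl⟩
  obtain ⟨J, z, y', hJ, hz, hy', hc, hk⟩ := Nat.find_spec hQ
  have hmin : ∀ J' z1 y1, HP G J' z1 y1 → z1 ∈ Z → y1 ∈ Y → J' ⊆ J → J.card ≤ J'.card := by
    intro J' z1 y1 h1 h2 h3 h4
    rw [hk]
    exact Nat.find_min' hQ ⟨J', z1, y1, h1, h2, h3, fun h => hc (h4 h), rfl⟩
  refine ⟨J, z, y', hJ, hz, hy', hc, ?_, ?_⟩
  · intro v hv hvZ
    by_contra hne
    obtain ⟨S1, S2, h1, h2, h3, h4⟩ := hJ.split hv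
    have hsub : S2 ⊆ J := h3 ▸ Finset.subset_union_right
    have hzn : z ∉ S2 := by
      intro hzz
      have : z ∈ S1 ∩ S2 := Finset.mem_inter.2 ⟨h1.left_mem, hzz⟩
      rw [h4, Finset.mem_singleton] at this
      exact hne this.symm
    have := hmin S2 v y' h2 hvZ hy' hsub
    have := Finset.card_lt_card (Finset.ssubset_iff_subset_ne.2 ⟨hsub, fun h => hzn (h ▸ hJ.left_mem)⟩)
    omega
  · intro v hv hvZ
    by_contra hne
    obtain ⟨S1, S2, h1, h2, h3, h4⟩ := hJ.split hv
    have hsub : S1 ⊆ J := h3 ▸ Finset.subset_union_left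
    have hzn : y' ∉ S1 := by
      intro hzz
      have : y' ∈ S1 ∩ S2 := Finset.mem_inter.2 ⟨hzz, h2.right_mem⟩
      rw [h4, Finset.mem_singleton] at this
      exact hne this.symm
    have := hmin S1 z v h1 hz hvZ hsub
    have := Finset.card_lt_card (Finset.ssubset_iff_subset_ne.2 ⟨hsub, fun h => hzn (h ▸ hJ.right_mem)⟩)
    omega

/-- connected vertex set -/
def Conn (G : SimpleGraph V) (C : Finset V) : Prop :=
  ∀ x ∈ C, ∀ y ∈ C, ∃ S, S ⊆ C ∧ HP G S x y

theorem exists_component (H : Finset V) (hH : H.Nonempty) :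
    ∃ C, C ⊆ H ∧ C.Nonempty ∧ Conn G C ∧ ∀ u ∈ C, ∀ v ∈ H, G.Adj u v → v ∈ C := by
  classical
  obtain ⟨x, hx⟩ := hH
  let F := H.powerset.filter (fun C => C.Nonempty ∧ Conn G C)
  have hF : F.Nonempty := ⟨{x}, by
    simp only [F, Finset.mem_filter, Finset.mem_powerset]
    refine ⟨by simpa using hx, by simp, ?_⟩
    intro a ha b hb
    rw [Finset.mem_singleton] at ha hb
    rw [ha, hb]
    exact ⟨{x}, le_rfl, .single _⟩⟩
  obtain ⟨C, hC, hmax⟩ := Finset.exists_max_image F Finset.card hF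
  simp only [F, Finset.mem_filter, Finset.mem_powerset] at hC hmax
  refine ⟨C, hC.1, hC.2.1, hC.2.2, ?_⟩
  intro u hu v hv ha
  by_contra hvC
  have key : ∀ y ∈ C, ∃ S, S ⊆ insert v C ∧ HP G S v y := by
    intro y hy
    obtain ⟨S, hS, h⟩ := hC.2.2 u hu y hy
    exact ⟨insert v S, Finset.insert_subset_insert _ hS, .cons h ha.symm (fun h => hvC (hS h))⟩
  have := hmax (insert v C) ⟨by
      intro z hz
      rcases Finset.mem_insert.1 hz with rfl | hz
      · exact hv
      · exact hC.1 hz, by simp, by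
      intro a haa b hb
      rw [Finset.mem_insert] at haa hb
      rcases haa with rfl | haa
      · rcases hb with rfl | hb
        · exact ⟨{b}, by simp, .single _⟩
        · exact key b hb
      · rcases hb with rfl | hb
        · obtain ⟨S, h1, h2⟩ := key a haa
          exact ⟨S, h1, h2.symm⟩
        · obtain ⟨S, h1, h2⟩ := hC.2.2 a haa b hb
          exact ⟨S, h1.trans (Finset.subset_insert _ _), h2⟩⟩
  rw [Finset.card_insert_of_notMem hvC] at this
  omega

/-- some component has at least the excess `θ ≤ 1` -/
theorem exists_component_excess (f : V → ℤ) (θ : ℤ) (hθ : θ ≤ 1) (hθ0 : 0 ≤ θ) (H : Finset V)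
    (hH : H.Nonempty) (hs : θ ≤ ∑ v ∈ H, f v) :
    ∃ C, C ⊆ H ∧ C.Nonempty ∧ Conn G C ∧ (∀ u ∈ C, ∀ v ∈ H, G.Adj u v → v ∈ C) ∧
      θ ≤ ∑ v ∈ C, f v := by
  induction H using Finset.strongInduction with
  | H H ih =>
    obtain ⟨C, h1, h2, h3, h4⟩ := exists_component (G := G) H hH
    by_cases hC : θ ≤ ∑ v ∈ C, f v
    · exact ⟨C, h1, h2, h3, h4, hC⟩
    have hsum : ∑ v ∈ H \ C, f v + ∑ v ∈ C, f v = ∑ v ∈ H, f v := Finset.sum_sdiff h1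
    have hne : (H \ C).Nonempty := by
      rw [Finset.nonempty_iff_ne_empty]
      intro h0
      rw [h0] at hsum
      simp at hsum
      omega
    have hss : H \ C ⊂ H := Finset.sdiff_ssubset h1 h2
    obtain ⟨D, d1, d2, d3, d4, d5⟩ := ih _ hss hne (by omega)
    refine ⟨D, d1.trans hss.1, d2, d3, ?_, d5⟩
    intro u hu v hv ha
    by_cases hvC : v ∈ C
    · have := h4 v hvC u (hss.1 (d1 hu)) ha.symm
      have := d1 hu
      grind
    · exact d4 u hu v (by grind) ha

/-- depth-first search lemma -/
theorem dfs (A : Finset V) (f : V → ℤ) (hfA : ∀ v ∈ A, f v = 1) (hfB : ∀ v, v ∉ A → f v = -1)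
    (hadj : ∀ u v, G.Adj u v → (u ∈ A ↔ v ∉ A)) (H : Finset V) (hH : Conn G H) (r : V)
    (hr : r ∈ H) (hs : (if r ∈ A then 1 else 0) ≤ ∑ v ∈ H, f v) :
    ∃ a ∈ A, ∃ S, S ⊆ H ∧ HP G S r a ∧ ∀ v ∈ H, G.Adj a v → v ∈ S := by
  induction H using Finset.strongInduction generalizing r with
  | H H ih =>
    have hsum : f r + ∑ v ∈ H.erase r, f v = ∑ v ∈ H, f v := Finset.add_sum_erase _ _ hr
    by_cases hE : (H.erase r).Nonempty
    · obtain ⟨C, h1, h2, h3, h4, h5⟩ := exists_component_excess (G := G) f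
        (if r ∈ A then 0 else 1) (by split_ifs <;> simp) (by split_ifs <;> simp) (H.erase r) hE (by
          by_cases h : r ∈ A
          · simp only [h, if_true] at hs ⊢
            have := hfA r h; omega
          · simp only [h, if_false] at hs ⊢
            have := hfB r h; omega)
      have hrC : r ∉ C := fun h => by simpa using h1 h
      obtain ⟨c, hc⟩ := h2
      have hcH : c ∈ H := Finset.mem_of_mem_erase (h1 hc)
      obtain ⟨S, hS, hp⟩ := hH r hr c hcH
      obtain ⟨u, hu, v, hv, huC, hvC, ha⟩ := hp.edge hrC hc
      have hur : u = r := by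
        by_contra hne
        exact huC (h4 v hvC u (Finset.mem_erase.2 ⟨hne, hS hu⟩) ha.symm)
      subst hur
      have hCH : C ⊂ H := Finset.ssubset_iff_subset_ne.2
        ⟨h1.trans (Finset.erase_subset _ _), fun h => hrC (h ▸ hr)⟩
      have := hadj u v ha
      obtain ⟨a, haA, S', hS', hp', hN⟩ := ih C hCH h3 v hvC (by
        by_cases h : u ∈ A
        · simpa [h, this.1 h] using h5
        · have hv : v ∈ A := by tauto
          simpa [h, hv] using h5)
      refine ⟨a, haA, insert u S', ?_, .cons hp' ha (fun h => hrC (hS' h)), ?_⟩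
      · intro z hz
        rcases Finset.mem_insert.1 hz with rfl | hz
        · exact hr
        · exact hCH.1 (hS' hz)
      · intro z hz haz
        by_cases hzu : z = u
        · simp [hzu]
        · refine Finset.mem_insert_of_mem (hN z ?_ haz)
          exact h4 a (hS' hp'.right_mem) z (Finset.mem_erase.2 ⟨hzu, hz⟩) haz
    · rw [Finset.not_nonempty_iff_eq_empty] at hE
      rw [hE] at hsum
      simp at hsum
      have hrA : r ∈ A := by
        by_contra h
        simp only [h, if_false] at hs
        have := hfB r h; omega
      refine ⟨r, hrA, {r}, by simpa using hr, .single _, ?_⟩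
      intro v hv _
      by_contra hne
      have : v ∈ H.erase r := Finset.mem_erase.2 ⟨by simpa using hne, hv⟩
      simp [hE] at this


/-- state of the augmentation along the path -/
def St (G : SimpleGraph V) (p : ℕ → V) (n a b v : ℕ) : Prop :=
  v ≤ n ∧ ∃ (u w : ℕ) (R R' : Finset V) (s1 s2 : V), u < a ∧ a ≤ w ∧ w ≤ b ∧ w < v ∧
    (∀ x ∈ R, x ∉ R') ∧ HP G R s1 (p w) ∧ HP G R' s2 (p v) ∧
    ((s1 = p a ∧ s2 = p u) ∨ (s1 = p u ∧ s2 = p a)) ∧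
    ∀ k ≤ n, p k ∈ R ∨ p k ∈ R' → k = u ∨ (a ≤ k ∧ k ≤ w) ∨ k = v

theorem St.base (H2 : ∀ c x y : V, x ≠ c → y ≠ c → ∃ S, HP G S x y ∧ c ∉ S)
    {p : ℕ → V} {n a b : ℕ} (hP : IsP G p n) (ha : 0 < a) (hab : a ≤ b) (hb : b < n) :
    ∃ v, St G p n a b v := by
  obtain ⟨J, z, y', hJ, hz, hy, hc, hZ, hY⟩ := exists_jump H2 (seg p 0 (a - 1)) (seg p (a + 1) n)
    (p a) (p 0) (p n) ((hP.mem_seg (by omega) (by omega)).2 (by omega))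
    ((hP.mem_seg (by omega) (by omega)).2 (by omega))
    (fun h => by have := hP.2 0 (by omega) a (by omega) h; omega)
    (fun h => by have := hP.2 n (by omega) a (by omega) h; omega)
  obtain ⟨u, -, hu, rfl⟩ := mem_seg.1 hz
  obtain ⟨v, hv, hvn, rfl⟩ := mem_seg.1 hy
  refine ⟨v, hvn, u, a, {p a}, J, p a, p u, by omega, le_rfl, hab, by omega, ?_, .single _, hJ,
    .inl ⟨rfl, rfl⟩, ?_⟩
  · simpa using hc
  · intro k hk hkR
    rcases hkR with h | h
    · have := hP.2 k hk a (by omega) (by simpa using h)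
      omega
    · rcases lt_trichotomy k a with h1 | h1 | h1
      · have := hP.2 k hk u (by omega) (hZ _ h ((hP.mem_seg (by omega) hk).2 (by omega)))
        omega
      · subst h1; exact absurd h hc
      · have := hP.2 k hk v (by omega) (hY _ h ((hP.mem_seg (by omega) hk).2 (by omega)))
        omega

theorem St.step (H2 : ∀ c x y : V, x ≠ c → y ≠ c → ∃ S, HP G S x y ∧ c ∉ S)
    {p : ℕ → V} {n a b v : ℕ} (hP : IsP G p n) (hb : b < n)
    (hSt : St G p n a b v) (hv : v ≤ b) :
    ∃ v', v < v' ∧ St G p n a b v' := by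
  obtain ⟨hvn, u, w, R, R', s1, s2, hua, haw, hwb, hwv, hd, hR, hR', hs, hk⟩ := hSt
  have hpvR' : p v ∈ R' := hR'.right_mem
  have hpvR : p v ∉ R := fun h => hd _ h hpvR'
  obtain ⟨J, z, y', hJ, hz, hy, hc, hZ, hY⟩ := exists_jump H2
    (R ∪ (R'.erase (p v)) ∪ seg p 0 (a - 1) ∪ seg p (w + 1) (v - 1)) (seg p (v + 1) n)
    (p v) (p 0) (p n) (by
      have : p 0 ∈ seg p 0 (a - 1) := (hP.mem_seg (by omega) (by omega)).2 (by omega)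
      simp [this])
    ((hP.mem_seg (by omega) (by omega)).2 (by omega))
    (fun h => by have := hP.2 0 (by omega) v (by omega) h; omega)
    (fun h => by have := hP.2 n (by omega) v (by omega) h; omega)
  obtain ⟨v', hv', hvn', rfl⟩ := mem_seg.1 hy
  have hJR : ∀ x ∈ J, x ∈ R → x = z := fun x h h' => hZ x h (by simp [h'])
  have hJR' : ∀ x ∈ J, x ∈ R' → x = z := fun x h h' => hZ x h (by
    have : x ≠ p v := fun he => hc (he ▸ h)
    simp [h', this])
  have hJk : ∀ k ≤ n, p k ∈ J → p k = z ∨ (a ≤ k ∧ k ≤ w) ∨ k = v' := by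
    intro k hkn h
    by_cases h1 : k < a
    · left
      refine hZ _ h ?_
      have : p k ∈ seg p 0 (a - 1) := (hP.mem_seg (by omega) (by omega)).2 (by omega)
      simp [this]
    by_cases h2 : k ≤ w
    · right; left; omega
    by_cases h3 : k < v
    · left
      refine hZ _ h ?_
      have : p k ∈ seg p (w + 1) (v - 1) := (hP.mem_seg (by omega) (by omega)).2 (by omega)
      simp [this]
    by_cases h4 : k = v
    · subst h4; exact absurd h hc
    · right; right
      exact hP.2 k hkn v' hvn' (hY _ h ((hP.mem_seg (by omega) hkn).2 (by omega)))
  -- extension of `R` along the path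
  have hext : ∀ j, w ≤ j → j ≤ v → HP G (R ∪ seg p w j) s1 (p j) := by
    intro j h1 h2
    refine hR.glue (hP.seg_hp h1 (by omega)) ?_
    intro x hx hx'
    obtain ⟨k, k1, k2, rfl⟩ := mem_seg.1 hx'
    have := hk k (by omega) (.inl hx)
    have : k ≠ v := by rintro rfl; exact hpvR hx
    have : k = w := by omega
    rw [this]
  refine ⟨v', by omega, hvn', ?_⟩
  by_cases hzR : z ∈ R
  · -- case 1
    obtain ⟨R0, R1, h1, -, h3, -⟩ := hR.split hzR
    have hsub : ∀ x ∈ R0, x ∈ R := fun x hx => h3 ▸ Finset.mem_union_left _ hx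
    refine ⟨u, v, R', R0 ∪ J, s2, s1, hua, by omega, hv, by omega, ?_, hR',
      h1.glue hJ (fun x hx hx' => hJR x hx' (hsub x hx)), by tauto, ?_⟩
    · intro x hx hx'
      rcases Finset.mem_union.1 hx' with h | h
      · exact hd x (hsub x h) hx
      · exact hd z hzR (hJR' x h hx ▸ hx)
    · intro k hkn h
      have hz' : p k = z → p k ∈ R := fun e => e ▸ hzR
      have := hJk k hkn
      have := hk k hkn
      have := hsub (p k)
      simp only [Finset.mem_union] at h
      grind
  by_cases hzR' : z ∈ R'
  · -- case 2
    have hzv : z ≠ p v := fun h => hc (h ▸ hJ.left_mem)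
    obtain ⟨R0, R1, h1, h2, h3, h4⟩ := hR'.split hzR'
    have hsub : ∀ x ∈ R0, x ∈ R' := fun x hx => h3 ▸ Finset.mem_union_left _ hx
    have hpv0 : p v ∉ R0 := by
      intro h
      have : p v ∈ R0 ∩ R1 := Finset.mem_inter.2 ⟨h, h2.right_mem⟩
      rw [h4, Finset.mem_singleton] at this
      exact hzv this.symm
    refine ⟨u, v, R ∪ seg p w v, R0 ∪ J, s1, s2, hua, by omega, hv, by omega, ?_,
      hext v hwv.le le_rfl, h1.glue hJ (fun x hx hx' => hJR' x hx' (hsub x hx)), hs, ?_⟩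
    · intro x hx hx'
      have hxR : x ∉ R := by
        intro hxR
        rcases Finset.mem_union.1 hx' with h | h
        · exact hd x hxR (hsub x h)
        · exact hd x hxR (hJR x h hxR ▸ hzR')
      have hx2 : x ∈ seg p w v := by
        rcases Finset.mem_union.1 hx with h | h
        · exact absurd h hxR
        · exact h
      obtain ⟨k, k1, k2, rfl⟩ := mem_seg.1 hx2
      have hkw : k ≠ w := by rintro rfl; exact hxR hR.right_mem
      have hkv : k ≠ v := by
        rintro rfl
        rcases Finset.mem_union.1 hx' with h | h
        · exact hpv0 h
        · exact hc h
      have hkR' : p k ∈ R' := by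
        rcases Finset.mem_union.1 hx' with h | h
        · exact hsub _ h
        · rcases hJk k (by omega) h with h5 | h5 | h5
          · exact h5 ▸ hzR'
          · omega
          · omega
      have := hk k (by omega) (.inr hkR')
      omega
    · intro k hkn h
      have hz' : p k = z → p k ∈ R' := fun e => e ▸ hzR'
      have := hJk k hkn
      have := hk k hkn
      have := hsub (p k)
      have := hP.mem_seg (i := w) (j := v) (by omega) hkn
      simp only [Finset.mem_union] at h
      grind
  have hzseg : z ∈ seg p 0 (a - 1) ∨ z ∈ seg p (w + 1) (v - 1) := by
    simp only [Finset.mem_union, Finset.mem_erase] at hz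
    tauto
  have hJRn : ∀ x ∈ J, x ∉ R := fun x h h' => hzR (hJR x h h' ▸ h')
  have hJRn' : ∀ x ∈ J, x ∉ R' := fun x h h' => hzR' (hJR' x h h' ▸ h')
  rcases hzseg with hzs | hzs
  · -- case 4
    obtain ⟨j, -, hj, rfl⟩ := mem_seg.1 hzs
    have hJk' : ∀ k ≤ n, p k ∈ J → k = j ∨ (a ≤ k ∧ k ≤ w) ∨ k = v' := by
      intro k hkn h
      rcases hJk k hkn h with h | h | h
      · left; exact hP.2 k hkn j (by omega) h
      · tauto
      · tauto
    rcases hs with ⟨rfl, rfl⟩ | ⟨rfl, rfl⟩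
    · refine ⟨j, v, R ∪ seg p w v, J, p a, p j, by omega, by omega, hv, by omega, ?_,
        hext v hwv.le le_rfl, hJ, .inl ⟨rfl, rfl⟩, ?_⟩
      · intro x hx hx'
        rcases Finset.mem_union.1 hx with h | h
        · exact hJRn x hx' h
        · obtain ⟨k, k1, k2, rfl⟩ := mem_seg.1 h
          have := hJk' k (by omega) hx'
          have : k = w := by omega
          subst this
          exact hJRn _ hx' hR.right_mem
      · intro k hkn h
        have hu' : p u ∉ R := fun h => hd _ h hR'.left_mem
        have := hJk' k hkn
        have := hk k hkn
        have := hP.mem_seg (i := w) (j := v) (by omega) hkn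
        simp only [Finset.mem_union] at h
        have : p k ∈ R → k ≠ u := by rintro h rfl; exact hu' h
        grind
    · refine ⟨j, v, R', J, p a, p j, by omega, by omega, hv, by omega,
        fun x hx hx' => hJRn' x hx' hx, hR', hJ, .inl ⟨rfl, rfl⟩, ?_⟩
      intro k hkn h
      have hu' : p u ∉ R' := fun h => hd _ hR.left_mem h
      have := hJk' k hkn
      have := hk k hkn
      have : p k ∈ R' → k ≠ u := by rintro h rfl; exact hu' h
      grind
  · -- case 3
    obtain ⟨j, hj1, hj2, rfl⟩ := mem_seg.1 hzs
    have hJk' : ∀ k ≤ n, p k ∈ J → k = j ∨ (a ≤ k ∧ k ≤ w) ∨ k = v' := by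
      intro k hkn h
      rcases hJk k hkn h with h | h | h
      · left; exact hP.2 k hkn j (by omega) h
      · tauto
      · tauto
    refine ⟨u, v, R', (R ∪ seg p w j) ∪ J, s2, s1, by omega, by omega, hv, by omega, ?_, hR',
      (hext j (by omega) (by omega)).glue hJ ?_, by tauto, ?_⟩
    · intro x hx hx'
      simp only [Finset.mem_union] at hx'
      rcases hx' with (h | h) | h
      · exact hd x h hx
      · obtain ⟨k, k1, k2, rfl⟩ := mem_seg.1 h
        have := hk k (by omega) (.inr hx)
        have : k = w := by omega
        subst this
        exact hd _ hR.right_mem hx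
      · exact hJRn' x h hx
    · intro x hx hx'
      rcases Finset.mem_union.1 hx with h | h
      · exact absurd h (hJRn x hx')
      · obtain ⟨k, k1, k2, rfl⟩ := mem_seg.1 h
        have := hJk' k (by omega) hx'
        by_cases hkw : k = w
        · subst hkw; exact absurd hR.right_mem (hJRn _ hx')
        · have : k = j := by omega
          rw [this]
    · intro k hkn h
      have := hJk' k hkn
      have := hk k hkn
      have := hP.mem_seg (i := w) (j := j) (by omega) hkn
      simp only [Finset.mem_union] at h
      grind

/-- two disjoint paths linking the two ends of a path (a vine) -/
theorem vine (H2 : ∀ c x y : V, x ≠ c → y ≠ c → ∃ S, HP G S x y ∧ c ∉ S)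
    {p : ℕ → V} {n a b : ℕ} (hP : IsP G p n) (ha : 0 < a) (hab : a ≤ b) (hb : b < n) :
    ∃ (u v : ℕ) (R R' : Finset V) (s1 s2 : V), u < a ∧ b < v ∧ v ≤ n ∧
    (∀ x ∈ R, x ∉ R') ∧ HP G R s1 (p b) ∧ HP G R' s2 (p v) ∧
    ((s1 = p a ∧ s2 = p u) ∨ (s1 = p u ∧ s2 = p a)) ∧
    ∀ k ≤ n, p k ∈ R ∨ p k ∈ R' → k = u ∨ (a ≤ k ∧ k ≤ b) ∨ k = v := by
  classical
  obtain ⟨v0, hv0⟩ := St.base H2 hP ha hab hb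
  have hex : ∃ v, St G p n a b v ∧ b < v := by
    by_contra hcon
    push Not at hcon
    have : ∀ m, ∃ v, m ≤ v ∧ St G p n a b v := by
      intro m
      induction m with
      | zero => exact ⟨v0, by omega, hv0⟩
      | succ m ih =>
        obtain ⟨v, h1, h2⟩ := ih
        obtain ⟨v', h3, h4⟩ := h2.step H2 hP hb (hcon v h2)
        exact ⟨v', by omega, h4⟩
    obtain ⟨v, h1, h2⟩ := this (n + 1)
    have := h2.1
    omega
  obtain ⟨v, ⟨hvn, u, w, R, R', s1, s2, hua, haw, hwb, hwv, hd, hR, hR', hs, hk⟩, hbv⟩ := hex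
  refine ⟨u, v, R ∪ seg p w b, R', s1, s2, hua, hbv, hvn, ?_, ?_, hR', hs, ?_⟩
  · intro x hx hx'
    rcases Finset.mem_union.1 hx with h | h
    · exact hd x h hx'
    · obtain ⟨k, k1, k2, rfl⟩ := mem_seg.1 h
      have := hk k (by omega) (.inr hx')
      have : k = w := by omega
      subst this
      exact hd _ hR.right_mem hx'
  · refine hR.glue (hP.seg_hp hwb (by omega)) ?_
    intro x hx hx'
    obtain ⟨k, k1, k2, rfl⟩ := mem_seg.1 hx'
    have := hk k (by omega) (.inl hx)
    have : k = w := by omega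
    rw [this]
  · intro k hkn h
    have := hk k hkn
    have := hP.mem_seg (i := w) (j := b) (by omega) hkn
    simp only [Finset.mem_union] at h
    grind


theorem exists_max_idx (Q : ℕ → Prop) (N : ℕ) (h : ∃ k ≤ N, Q k) :
    ∃ k ≤ N, Q k ∧ ∀ j ≤ N, Q j → j ≤ k := by
  classical
  obtain ⟨k, hk, hQ⟩ := h
  obtain ⟨m, hm, hmax⟩ := Finset.exists_max_image ((Finset.range (N + 1)).filter Q) id
    ⟨k, by simp [hQ]; omega⟩
  simp only [Finset.mem_filter, Finset.mem_range, id] at hm hmax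
  exact ⟨m, by omega, hm.2, fun j hj hQj => hmax j ⟨by omega, hQj⟩⟩

theorem exists_min_idx (Q : ℕ → Prop) (N : ℕ) (h : ∃ k ≤ N, Q k) :
    ∃ k ≤ N, Q k ∧ ∀ j, Q j → k ≤ j := by
  classical
  obtain ⟨k, hk, hQ⟩ := h
  exact ⟨Nat.find ⟨k, hQ⟩, (Nat.find_min' _ hQ).trans hk, Nat.find_spec ⟨k, hQ⟩,
    fun j hj => Nat.find_min' _ hj⟩

theorem long_cycle (H2 : ∀ c x y : V, x ≠ c → y ≠ c → ∃ S, HP G S x y ∧ c ∉ S)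
    {p : ℕ → V} {n : ℕ} (hP : IsP G p n) (hn : 2 ≤ n) :
    ∃ C, Cyc G C ∧ (n ≤ C.card ∨
      ((∀ k, k + 1 ≤ n → G.Adj (p 0) (p (k + 1)) → ¬ G.Adj (p n) (p k)) ∧
       (∀ k, k + 2 ≤ n → G.Adj (p 0) (p (k + 2)) → ¬ G.Adj (p n) (p k)) ∧
       (∀ k ≤ n, G.Adj (p n) (p k) → p k ∈ C) ∧
       (∃ i0, ∀ k, k + 1 ≤ n → k ≠ i0 → G.Adj (p 0) (p (k + 1)) → p k ∈ C) ∧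
       (∃ i1, ∀ k, k + 1 ≤ n → k + 1 ≠ i1 → G.Adj (p n) (p k) → p (k + 1) ∈ C))) := by
  classical
  by_cases hcr : ∃ d ≤ n, ∃ i, i + d ≤ n ∧ 0 < d ∧ G.Adj (p 0) (p (i + d)) ∧ G.Adj (p n) (p i)
  · -- crossing
    obtain ⟨d, hdn, ⟨i, hid, hd0, h0, h1⟩, hmin⟩ := exists_min_idx _ n hcr
    have hmin' : ∀ i' j', i' < j' → j' ≤ n → G.Adj (p 0) (p j') → G.Adj (p n) (p i') →
        d ≤ j' - i' := by
      intro i' j' h2 h3 h4 h5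
      refine hmin (j' - i') ⟨i', by omega, by omega, ?_, h5⟩
      rwa [show i' + (j' - i') = j' by omega]
    have hdisj : Disjoint (seg p 0 i) (seg p (i + d) n) := by
      rw [Finset.disjoint_left]
      intro x hx hx'
      obtain ⟨k, k1, k2, rfl⟩ := mem_seg.1 hx
      rw [hP.mem_seg le_rfl (by omega)] at hx'
      omega
    have hcard : (seg p 0 i ∪ seg p (i + d) n).card = i + 1 + (n + 1 - (i + d)) := by
      rw [Finset.card_union_of_disjoint hdisj, hP.card_seg (by omega), hP.card_seg le_rfl]
      omega
    have h01 := hP.1 0 (by omega)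
    refine ⟨seg p 0 i ∪ seg p (i + d) n, ⟨p i, p n,
      (hP.seg_hp (Nat.zero_le i) (by omega)).symm.concat (hP.seg_hp hid le_rfl) h0 hdisj, h1, ?_⟩, ?_⟩
    · rw [hcard]
      by_cases hi : i = 0
      · subst hi
        have := hmin' 0 1 (by omega) (by omega) (by simpa using h01) h1
        omega
      · omega
    · rw [hcard]
      by_cases hd2 : d ≤ 2
      · left; omega
      right
      refine ⟨?_, ?_, ?_, ⟨i + d - 1, ?_⟩, ⟨i + 1, ?_⟩⟩
      · intro k hk h2 h3
        have := hmin' k (k + 1) (by omega) hk h2 h3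
        omega
      · intro k hk h2 h3
        have := hmin' k (k + 2) (by omega) hk h2 h3
        omega
      · intro k hk h2
        rw [Finset.mem_union, hP.mem_seg (by omega) hk, hP.mem_seg le_rfl hk]
        by_contra hcon
        have := hmin' k (i + d) (by omega) hid h0 h2
        omega
      · intro k hk hne h2
        rw [Finset.mem_union, hP.mem_seg (by omega) (by omega), hP.mem_seg le_rfl (by omega)]
        by_contra hcon
        have := hmin' i (k + 1) (by omega) hk h2 h1
        omega
      · intro k hk hne h2
        rw [Finset.mem_union, hP.mem_seg (by omega) (by omega), hP.mem_seg le_rfl (by omega)]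
        by_contra hcon
        have := hmin' k (i + d) (by omega) hid h0 h2
        omega
  · -- no crossing
    have hnc : ∀ i j, i ≤ n → j ≤ n → G.Adj (p 0) (p j) → G.Adj (p n) (p i) → j ≤ i := by
      intro i j hi hj h0 h1
      by_contra hlt
      refine hcr ⟨j - i, by omega, i, by omega, by omega, ?_, h1⟩
      rwa [show i + (j - i) = j by omega]
    have h01 : G.Adj (p 0) (p 1) := by simpa using hP.1 0 (by omega)
    have hnn : G.Adj (p n) (p (n - 1)) := by
      have := hP.1 (n - 1) (by omega)
      rw [show n - 1 + 1 = n by omega] at this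
      exact this.symm
    obtain ⟨a, han, ha, hamax⟩ := exists_max_idx (fun j => G.Adj (p 0) (p j)) n ⟨1, by omega, h01⟩
    obtain ⟨b, hbn, hb, hbmin⟩ := exists_min_idx (fun j => G.Adj (p n) (p j)) (n - 1)
      ⟨n - 1, le_rfl, hnn⟩
    have ha1 := hamax 1 (by omega) h01
    have hab := hnc b a (by omega) han ha hb
    obtain ⟨u, v, R, R', s1, s2, hua, hbv, hvn, hd, hR, hR', hs, hk⟩ :=
      vine H2 hP (by omega) hab (by omega : b < n)
    obtain ⟨j, hja, ⟨huj, hj⟩, hjmin⟩ := exists_min_idx (fun j => u < j ∧ G.Adj (p 0) (p j)) a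
      ⟨a, le_rfl, hua, ha⟩
    obtain ⟨l, hlv, hl, hlmax⟩ := exists_max_idx (fun j => G.Adj (p n) (p j)) (v - 1)
      ⟨b, by omega, hb⟩
    have hbl := hbmin l hl
    -- left part
    have hLdisj : Disjoint (seg p 0 u) (seg p j a) := by
      rw [Finset.disjoint_left]
      intro x hx hx'
      obtain ⟨k, k1, k2, rfl⟩ := mem_seg.1 hx
      rw [hP.mem_seg (by omega) (by omega)] at hx'
      omega
    have hL : HP G (seg p 0 u ∪ seg p j a) (p u) (p a) :=
      (hP.seg_hp (Nat.zero_le u) (by omega)).symm.concat (hP.seg_hp hja han) hj hLdisj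
    have hRdisj : Disjoint (seg p b l) (seg p v n) := by
      rw [Finset.disjoint_left]
      intro x hx hx'
      obtain ⟨k, k1, k2, rfl⟩ := mem_seg.1 hx
      rw [hP.mem_seg (by omega) (by omega)] at hx'
      omega
    have hRr : HP G (seg p b l ∪ seg p v n) (p b) (p v) :=
      (hP.seg_hp hbl (by omega)).concat (hP.seg_hp hvn le_rfl).symm hl.symm hRdisj
    have mL : ∀ k ≤ n, p k ∈ seg p 0 u ∪ seg p j a ↔ (k ≤ u ∨ (j ≤ k ∧ k ≤ a)) := by
      intro k hkn
      rw [Finset.mem_union, hP.mem_seg (by omega) hkn, hP.mem_seg (by omega) hkn]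
      omega
    have mR : ∀ k ≤ n, p k ∈ seg p b l ∪ seg p v n ↔ ((b ≤ k ∧ k ≤ l) ∨ v ≤ k) := by
      intro k hkn
      rw [Finset.mem_union, hP.mem_seg (by omega) hkn, hP.mem_seg (by omega) hkn]
      omega
    have eL : ∀ x ∈ seg p 0 u ∪ seg p j a, ∃ k ≤ n, p k = x := by
      intro x hx
      rcases Finset.mem_union.1 hx with h | h <;> obtain ⟨k, k1, k2, rfl⟩ := mem_seg.1 h
      · exact ⟨k, by omega, rfl⟩
      · exact ⟨k, by omega, rfl⟩
    have eR : ∀ x ∈ seg p b l ∪ seg p v n, ∃ k ≤ n, p k = x := by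
      intro x hx
      rcases Finset.mem_union.1 hx with h | h <;> obtain ⟨k, k1, k2, rfl⟩ := mem_seg.1 h
      · exact ⟨k, by omega, rfl⟩
      · exact ⟨k, by omega, rfl⟩
    generalize seg p 0 u ∪ seg p j a = LL at hL mL eL
    generalize seg p b l ∪ seg p v n = RR at hRr mR eR
    have hC : ∃ C, Cyc G C ∧ (∀ x ∈ LL, x ∈ C) ∧ (∀ x ∈ RR, x ∈ C) := by
      have c3 : ∀ X : Finset V, (∀ x ∈ LL, x ∈ X) → (∀ x ∈ RR, x ∈ X) → 3 ≤ X.card := by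
        intro X h1 h2
        have e0 : p 0 ∈ X := h1 _ ((mL 0 (by omega)).2 (by omega))
        have e1 : p a ∈ X := h1 _ ((mL a (by omega)).2 (by omega))
        have e2 : p n ∈ X := h2 _ ((mR n (by omega)).2 (by omega))
        have : ({p 0, p a, p n} : Finset V).card = 3 := by
          refine Finset.card_eq_three.2 ⟨_, _, _, ?_, ?_, ?_, rfl⟩
          · intro h; have := hP.2 0 (by omega) a (by omega) h; omega
          · intro h; have := hP.2 0 (by omega) n (by omega) h; omega
          · intro h; have := hP.2 a (by omega) n (by omega) h; omega
        rw [← this]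
        apply Finset.card_le_card
        intro x hx
        simp only [Finset.mem_insert, Finset.mem_singleton] at hx
        rcases hx with rfl | rfl | rfl <;> assumption
      have huv : p u ≠ p v := fun h => by have := hP.2 u (by omega) v hvn h; omega
      have hub : p u ≠ p b := fun h => by have := hP.2 u (by omega) b (by omega) h; omega
      rcases hs with ⟨rfl, rfl⟩ | ⟨rfl, rfl⟩
      · -- `R` from `p a` to `p b`, `R'` from `p u` to `p v`
        have nu : p u ∉ R := fun h => hd _ h hR'.left_mem
        have nv : p v ∉ R := fun h => hd _ h hR'.right_mem
        have na : p a ∉ R' := fun h => hd _ hR.left_mem h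
        have nb : p b ∉ R' := fun h => hd _ hR.right_mem h
        have g1 := hL.glue hR (by
          intro x hx hx'
          obtain ⟨k, hkn, rfl⟩ := eL x hx
          have h1 := (mL k hkn).1 hx
          have h2 := hk k hkn (.inl hx')
          have h3 : k ≠ u := by rintro rfl; exact nu hx'
          have : k = a := by omega
          rw [this])
        have g2 := g1.glue hRr (by
          intro x hx hx'
          obtain ⟨k, hkn, rfl⟩ := eR x hx'
          have h1 := (mR k hkn).1 hx'
          rcases Finset.mem_union.1 hx with h | h
          · have h2 := (mL k hkn).1 h
            have : k = b := by omega
            rw [this]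
          · have h2 := hk k hkn (.inl h)
            have h3 : k ≠ v := by rintro rfl; exact nv h
            have : k = b := by omega
            rw [this])
        refine ⟨_, g2.cyc hR' huv ?_ (c3 _ (by grind) (by grind)), by grind, by grind⟩
        intro x hx hx'
        simp only [Finset.mem_union] at hx
        rcases hx with (h | h) | h
        · obtain ⟨k, hkn, rfl⟩ := eL x h
          have h1 := (mL k hkn).1 h
          have h2 := hk k hkn (.inr hx')
          have h3 : k ≠ a := by rintro rfl; exact na hx'
          have : k = u := by omega
          left; rw [this]
        · exact absurd hx' (hd x h)
        · obtain ⟨k, hkn, rfl⟩ := eR x h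
          have h1 := (mR k hkn).1 h
          have h2 := hk k hkn (.inr hx')
          have h3 : k ≠ b := by rintro rfl; exact nb hx'
          have : k = v := by omega
          right; rw [this]
      · -- `R` from `p u` to `p b`, `R'` from `p a` to `p v`
        have nu : p u ∉ R' := fun h => hd _ hR.left_mem h
        have nv : p v ∉ R := fun h => hd _ h hR'.right_mem
        have na : p a ∉ R := fun h => hd _ h hR'.left_mem
        have nb : p b ∉ R' := fun h => hd _ hR.right_mem h
        have hab' : a ≠ b := by rintro rfl; exact nb hR'.left_mem
        have g1 := hL.glue hR' (by
          intro x hx hx'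
          obtain ⟨k, hkn, rfl⟩ := eL x hx
          have h1 := (mL k hkn).1 hx
          have h2 := hk k hkn (.inr hx')
          have h3 : k ≠ u := by rintro rfl; exact nu hx'
          have : k = a := by omega
          rw [this])
        have g2 := g1.glue hRr.symm (by
          intro x hx hx'
          obtain ⟨k, hkn, rfl⟩ := eR x hx'
          have h1 := (mR k hkn).1 hx'
          rcases Finset.mem_union.1 hx with h | h
          · have h2 := (mL k hkn).1 h
            omega
          · have h2 := hk k hkn (.inr h)
            have h3 : k ≠ b := by rintro rfl; exact nb h
            have : k = v := by omega
            rw [this])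
        refine ⟨_, g2.cyc hR hub ?_ (c3 _ (by grind) (by grind)), by grind, by grind⟩
        intro x hx hx'
        simp only [Finset.mem_union] at hx
        rcases hx with (h | h) | h
        · obtain ⟨k, hkn, rfl⟩ := eL x h
          have h1 := (mL k hkn).1 h
          have h2 := hk k hkn (.inl hx')
          have h3 : k ≠ a := by rintro rfl; exact na hx'
          have : k = u := by omega
          left; rw [this]
        · exact absurd h (hd x hx')
        · obtain ⟨k, hkn, rfl⟩ := eR x h
          have h1 := (mR k hkn).1 h
          have h2 := hk k hkn (.inl hx')
          have h3 : k ≠ v := by rintro rfl; exact nv hx'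
          have : k = b := by omega
          right; rw [this]
    obtain ⟨C, hC, hLC, hRC⟩ := hC
    refine ⟨C, hC, .inr ⟨?_, ?_, ?_, ⟨j - 1, ?_⟩, ⟨l + 1, ?_⟩⟩⟩
    · intro k hkn h1 h2
      have := hnc k (k + 1) (by omega) hkn h1 h2
      omega
    · intro k hkn h1 h2
      have := hnc k (k + 2) (by omega) hkn h1 h2
      omega
    · intro k hkn h
      refine hRC _ ((mR k hkn).2 ?_)
      have := hbmin k h
      by_cases hkv : v ≤ k
      · omega
      · have := hlmax k (by omega) h
        omega
    · intro k hkn hne h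
      refine hLC _ ((mL k (by omega)).2 ?_)
      have := hamax (k + 1) hkn h
      by_cases hku : k + 1 ≤ u
      · omega
      · have := hjmin (k + 1) ⟨by omega, h⟩
        omega
    · intro k hkn hne h
      refine hRC _ ((mR (k + 1) hkn).2 ?_)
      have := hbmin k h
      by_cases hkv : v ≤ k
      · omega
      · have := hlmax k (by omega) h
        omega


theorem HP.balance (A : Finset V) (hadj : ∀ u v, G.Adj u v → (u ∈ A ↔ v ∉ A))
    {S : Finset V} {x y : V} (h : HP G S x y) :
    4 * ((S ∩ A).card : ℤ) = 2 * S.card + (if x ∈ A then 1 else -1) + (if y ∈ A then 1 else -1) := by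
  induction h with
  | single a =>
    by_cases ha : a ∈ A
    · simp [ha]
    · simp [ha]
  | @cons S x y z h ha hx ih =>
    have := hadj x y ha
    rw [Finset.card_insert_of_notMem hx]
    by_cases hxA : x ∈ A
    · have hy := this.1 hxA
      rw [Finset.insert_inter_of_mem hxA, Finset.card_insert_of_notMem (by simp [hx])]
      simp only [hxA, hy, if_true, if_false] at ih ⊢
      push_cast; linarith
    · have hy : y ∈ A := by tauto
      rw [Finset.insert_inter_of_notMem hxA]
      simp only [hxA, hy, if_true, if_false] at ih ⊢
      push_cast; linarith

theorem Cyc.balance (A : Finset V) (hadj : ∀ u v, G.Adj u v → (u ∈ A ↔ v ∉ A))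
    {C : Finset V} (h : Cyc G C) : C.card = 2 * (C ∩ A).card := by
  obtain ⟨x, y, h, ha, -⟩ := h
  have h1 := h.balance A hadj
  have := hadj y x ha
  by_cases hx : x ∈ A
  · have hy : y ∉ A := by tauto
    simp only [hx, hy, if_true, if_false] at h1
    omega
  · have hy : y ∈ A := by tauto
    simp only [hx, hy, if_true, if_false] at h1
    omega

theorem idx_card [Fintype V] [DecidableRel G.Adj] (x : V) (q : ℕ → V) (n : ℕ)
    (h : ∀ v, G.Adj x v → ∃ k < n, q k = v) :
    G.degree x ≤ ((Finset.range n).filter (fun k => G.Adj x (q k))).card := by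
  rw [← SimpleGraph.card_neighborFinset_eq_degree]
  refine le_trans (Finset.card_le_card ?_) (Finset.card_image_le (f := q))
  intro v hv
  rw [SimpleGraph.mem_neighborFinset] at hv
  obtain ⟨k, hk, rfl⟩ := h v hv
  simp only [Finset.mem_image, Finset.mem_filter, Finset.mem_range]
  exact ⟨k, ⟨hk, hv⟩, rfl⟩

theorem cycle_of_path [Fintype V] [DecidableRel G.Adj]
    (H2 : ∀ c x y : V, x ≠ c → y ≠ c → ∃ S, HP G S x y ∧ c ∉ S)
    (A : Finset V) (hadj : ∀ u v, G.Adj u v → (u ∈ A ↔ v ∉ A)) (hdeg : ∀ v, 2 ≤ G.degree v)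
    {S : Finset V} {x y : V} (h : HP G S x y) (hx : x ∈ A)
    (hNx : ∀ v, G.Adj x v → v ∈ S) (hNy : ∀ v, G.Adj y v → v ∈ S) :
    ∃ C, Cyc G C ∧ (S.card ≤ C.card + 1 ∨
      (y ∉ A ∧ 2 * (G.degree x + G.degree y - 1) ≤ C.card) ∨
      (y ∈ A ∧ 2 * (G.degree x + G.degree y - 2) ≤ C.card)) := by
  obtain ⟨n, p, hn, rfl, rfl, hp1, hp2, hS⟩ := h.index
  have hP : IsP G p n := ⟨hp1, hp2⟩
  have hK1 := idx_card (G := G) (p 0) (fun k => p (k + 1)) n (by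
    intro v hv
    obtain ⟨k, hk, rfl⟩ := (hS v).1 (hNx v hv)
    have : k ≠ 0 := by rintro rfl; exact hv.ne rfl
    exact ⟨k - 1, by omega, by rw [show k - 1 + 1 = k by omega]⟩)
  have hK2 := idx_card (G := G) (p n) p n (by
    intro v hv
    obtain ⟨k, hk, rfl⟩ := (hS v).1 (hNy v hv)
    have : k ≠ n := by rintro rfl; exact hv.ne rfl
    exact ⟨k, by omega, rfl⟩)
  have hn2 : 2 ≤ n := by
    refine (hdeg (p 0)).trans (hK1.trans ((Finset.card_filter_le _ _).trans (by simp)))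
  have hd0 := hdeg (p 0)
  have hdn := hdeg (p n)
  obtain ⟨C, hC, hc⟩ := long_cycle H2 hP hn2
  refine ⟨C, hC, ?_⟩
  rcases hc with hc | ⟨c1, c2, c3, ⟨i0, c4⟩, ⟨i1, c5⟩⟩
  · left; omega
  right
  have hbal := hC.balance A hadj
  set K1 := (Finset.range n).filter (fun k => G.Adj (p 0) (p (k + 1))) with hK1d
  set K2 := (Finset.range n).filter (fun k => G.Adj (p n) (p k)) with hK2d
  have count : ∀ K : Finset ℕ, (∀ k ∈ K, k ≤ n ∧ p k ∈ C ∧ p k ∈ A) → K.card ≤ (C ∩ A).card := by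
    intro K hK
    have : (K.image p).card = K.card := by
      refine Finset.card_image_of_injOn ?_
      intro a ha b hb hab
      exact hp2 a (hK a ha).1 b (hK b hb).1 hab
    rw [← this]
    apply Finset.card_le_card
    intro v hv
    obtain ⟨k, hk, rfl⟩ := Finset.mem_image.1 hv
    exact Finset.mem_inter.2 (hK k hk).2
  have k1A : ∀ k < n, G.Adj (p 0) (p (k + 1)) → p k ∈ A := by
    intro k hk h
    have h1 := hadj _ _ h
    have h2 := hadj _ _ (hp1 k hk)
    tauto
  have e1 : K1.card - 1 ≤ (K1.erase i0).card := Finset.pred_card_le_card_erase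
  by_cases hy : p n ∈ A
  · right
    refine ⟨hy, ?_⟩
    have hsh : (K2.image (· + 1)).card = K2.card :=
      Finset.card_image_of_injective _ (add_left_injective 1)
    have e2 : (K2.image (· + 1)).card - 1 ≤ ((K2.image (· + 1)).erase i1).card :=
      Finset.pred_card_le_card_erase
    have hdis : Disjoint (K1.erase i0) ((K2.image (· + 1)).erase i1) := by
      rw [Finset.disjoint_left]
      intro k hk hk'
      simp only [hK1d, hK2d, Finset.mem_erase, Finset.mem_filter, Finset.mem_range,
        Finset.mem_image] at hk hk'
      obtain ⟨-, m, ⟨hm, h1⟩, rfl⟩ := hk'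
      exact c2 m (by omega) hk.2.2 h1
    have := count (K1.erase i0 ∪ (K2.image (· + 1)).erase i1) (by
      intro k hk
      rcases Finset.mem_union.1 hk with h | h
      · simp only [hK1d, Finset.mem_erase, Finset.mem_filter, Finset.mem_range] at h
        exact ⟨by omega, c4 k (by omega) h.1 h.2.2, k1A k h.2.1 h.2.2⟩
      · simp only [hK2d, Finset.mem_erase, Finset.mem_filter, Finset.mem_range,
          Finset.mem_image] at h
        obtain ⟨hne, m, ⟨hm, h1⟩, rfl⟩ := h
        refine ⟨by omega, c5 m (by omega) hne h1, ?_⟩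
        have h1 := hadj _ _ h1
        have h2 := hadj _ _ (hp1 m hm)
        tauto)
    rw [Finset.card_union_of_disjoint hdis] at this
    omega
  · left
    refine ⟨hy, ?_⟩
    have hdis : Disjoint (K1.erase i0) K2 := by
      rw [Finset.disjoint_left]
      intro k hk hk'
      simp only [hK1d, hK2d, Finset.mem_erase, Finset.mem_filter, Finset.mem_range] at hk hk'
      exact c1 k (by omega) hk.2.2 hk'.2
    have := count (K1.erase i0 ∪ K2) (by
      intro k hk
      rcases Finset.mem_union.1 hk with h | h
      · simp only [hK1d, Finset.mem_erase, Finset.mem_filter, Finset.mem_range] at h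
        exact ⟨by omega, c4 k (by omega) h.1 h.2.2, k1A k h.2.1 h.2.2⟩
      · simp only [hK2d, Finset.mem_filter, Finset.mem_range] at h
        refine ⟨by omega, c3 k (by omega) h.2, ?_⟩
        have h1 := hadj _ _ h.2
        tauto)
    rw [Finset.card_union_of_disjoint hdis] at this
    omega


theorem sum_sign (A H : Finset V) :
    ∑ v ∈ H, (if v ∈ A then (1 : ℤ) else -1) = 2 * ((H ∩ A).card : ℤ) - H.card := by
  induction H using Finset.induction_on with
  | empty => simp
  | insert a s ha ih =>
    rw [Finset.sum_insert ha, ih, Finset.card_insert_of_notMem ha]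
    by_cases h : a ∈ A
    · rw [Finset.insert_inter_of_mem h, Finset.card_insert_of_notMem (by simp [ha])]
      simp only [h, if_true]
      push_cast; ring
    · rw [Finset.insert_inter_of_notMem h]
      simp only [h, if_false]
      push_cast; ring

/-- The case of a longest path with both ends outside `A`. -/
theorem case_BB [Fintype V] [DecidableRel G.Adj]
    (H1 : ∀ x y : V, ∃ S, HP G S x y)
    (H2 : ∀ c x y : V, x ≠ c → y ≠ c → ∃ S, HP G S x y ∧ c ∉ S)
    (A : Finset V) (hadj : ∀ u v, G.Adj u v → (u ∈ A ↔ v ∉ A)) (hdeg : ∀ v, 2 ≤ G.degree v)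
    (hA : Fintype.card V ≤ 2 * A.card) (s t : ℕ)
    (hs : ∀ a ∈ A, s ≤ G.degree a) (ht : ∀ b, b ∉ A → t ≤ G.degree b)
    {S : Finset V} {x y : V} (h : HP G S x y) (hx : x ∉ A) (hy : y ∉ A)
    (hmax : ∀ S' x' y', HP G S' x' y' → S'.card ≤ S.card) :
    ∃ C, Cyc G C ∧ 2 * (s + t - 1) ≤ C.card := by
  obtain ⟨n, p, hn, rfl, rfl, hp1, hp2, hS⟩ := h.index
  have hP : IsP G p n := ⟨hp1, hp2⟩
  have hNn : ∀ v, G.Adj (p n) v → v ∈ S := by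
    intro v hv
    by_contra hvS
    have := hmax _ _ _ (h.snoc hv hvS)
    rw [Finset.card_insert_of_notMem hvS] at this
    omega
  -- the component
  obtain ⟨H, hHS, hHne, hHc, hHcl, hHsum⟩ : ∃ H, H ⊆ Finset.univ \ S ∧ H.Nonempty ∧ Conn G H ∧
      (∀ u ∈ H, ∀ v ∈ Finset.univ \ S, G.Adj u v → v ∈ H) ∧
      1 ≤ ∑ v ∈ H, (if v ∈ A then (1 : ℤ) else -1) := by
    have hsum : 1 ≤ ∑ v ∈ Finset.univ \ S, (if v ∈ A then (1 : ℤ) else -1) := by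
      have h1 := Finset.sum_sdiff (f := fun v => (if v ∈ A then (1 : ℤ) else -1))
        (Finset.subset_univ S)
      rw [sum_sign A S, sum_sign A Finset.univ, Finset.univ_inter, Finset.card_univ] at h1
      have h2 := h.balance A hadj
      simp only [hx, hy, if_false] at h2
      omega
    refine exists_component_excess _ 1 le_rfl (by norm_num) _ ?_ hsum
    rw [Finset.nonempty_iff_ne_empty]
    intro h0
    rw [h0] at hsum
    simp at hsum
  have hHnS : ∀ v ∈ H, v ∉ S := fun v hv => (Finset.mem_sdiff.1 (hHS hv)).2
  have hHnp : ∀ k ≤ n, p k ∉ H := fun k hk hkH => hHnS _ hkH ((hS _).2 ⟨k, hk, rfl⟩)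
  have hatt : ∃ c ≤ n, ∃ r ∈ H, G.Adj (p c) r := by
    obtain ⟨z, hz⟩ := hHne
    obtain ⟨T, hT⟩ := H1 (p 0) z
    obtain ⟨u, -, v, -, huH, hvH, huv⟩ := hT.edge (hHnp 0 (by omega)) hz
    have huS : u ∈ S := by
      by_contra huS
      exact huH (hHcl v hvH u (by simp [huS]) huv.symm)
    obtain ⟨c, hc, rfl⟩ := (hS u).1 huS
    exact ⟨c, hc, v, hvH, huv⟩
  obtain ⟨c, hcn, ⟨r, hrH, hcr⟩, hcmin⟩ := exists_min_idx _ n hatt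
  obtain ⟨a, haA, Q, hQH, hQ, hQN⟩ := dfs A (fun v => if v ∈ A then (1 : ℤ) else -1)
    (fun v hv => by simp [hv]) (fun v hv => by simp [hv]) hadj H hHc r hrH
    (by split_ifs <;> omega)
  have haH : a ∈ H := hQH hQ.right_mem
  have hQnp : ∀ k ≤ n, p k ∉ Q := fun k hk hkQ => hHnp k hk (hQH hkQ)
  have hNa : ∀ v, G.Adj a v → v ∈ Q ∨ ∃ j, c ≤ j ∧ j ≤ n ∧ p j = v := by
    intro v hv
    by_cases hvH : v ∈ H
    · exact .inl (hQN v hvH hv)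
    · have hvS : v ∈ S := by
        by_contra hvS
        exact hvH (hHcl a haH v (by simp [hvS]) hv)
      obtain ⟨j, hj, rfl⟩ := (hS v).1 hvS
      exact .inr ⟨j, hcmin j ⟨a, haH, hv.symm⟩, hj, rfl⟩
  set D := (G.neighborFinset a) ∩ Q with hD
  set E := (Finset.range (n + 1)).filter (fun j => G.Adj a (p j)) with hE
  have hEm : ∀ j, j ∈ E ↔ j ≤ n ∧ G.Adj a (p j) := by
    intro j; simp only [hE, Finset.mem_filter, Finset.mem_range, Nat.lt_succ_iff]
  have hEc : ∀ j ∈ E, c ≤ j := fun j hj => hcmin j ⟨a, haH, ((hEm j).1 hj).2.symm⟩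
  have hDE : s ≤ D.card + E.card := by
    refine (hs a haA).trans ?_
    rw [← SimpleGraph.card_neighborFinset_eq_degree]
    have : G.neighborFinset a ⊆ D ∪ E.image p := by
      intro v hv
      have hv' := (SimpleGraph.mem_neighborFinset _ _ _).1 hv
      rcases hNa v hv' with h1 | ⟨j, -, hj, rfl⟩
      · exact Finset.mem_union_left _ (Finset.mem_inter.2 ⟨hv, h1⟩)
      · exact Finset.mem_union_right _ (Finset.mem_image.2 ⟨j, (hEm j).2 ⟨hj, hv'⟩, rfl⟩)
    refine (Finset.card_le_card this).trans ((Finset.card_union_le _ _).trans ?_)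
    have := Finset.card_image_le (s := E) (f := p)
    omega
  have hQbal : Q.card ≤ 2 * (Q ∩ A).card := by
    have := hQ.balance A hadj
    simp only [haA, if_true] at this
    split_ifs at this <;> omega
  have hDQ : D.card ≤ (Q \ A).card := by
    apply Finset.card_le_card
    intro v hv
    have hv' := Finset.mem_inter.1 hv
    have := hadj a v ((SimpleGraph.mem_neighborFinset _ _ _).1 hv'.1)
    exact Finset.mem_sdiff.2 ⟨hv'.2, this.1 haA⟩
  have hQsplit : (Q \ A).card + (Q ∩ A).card = Q.card := Finset.card_sdiff_add_card_inter Q A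
  have hQpos : 0 < Q.card := Finset.card_pos.2 ⟨a, hQ.right_mem⟩
  -- disjointness of the pieces
  have dseg : ∀ i j k l, j < k → l ≤ n → Disjoint (seg p i j) (seg p k l) := by
    intro i j k l hjk hl
    rw [Finset.disjoint_left]
    intro z hz hz'
    obtain ⟨m, m1, m2, rfl⟩ := mem_seg.1 hz'
    by_cases hjn : j ≤ n
    · rw [hP.mem_seg hjn (by omega)] at hz
      omega
    · omega
  have dQ : ∀ T : Finset V, T ⊆ H → ∀ i j, j ≤ n → Disjoint T (seg p i j) := by
    intro T hT i j hj
    rw [Finset.disjoint_left]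
    intro z hz hz'
    obtain ⟨m, m1, m2, rfl⟩ := mem_seg.1 hz'
    exact hHnp m (by omega) (hT hz)
  have hPc := hP.seg_hp hcn le_rfl
  have hQP : HP G (Q ∪ seg p c n) a (p n) := hQ.symm.concat hPc hcr.symm (dQ Q hQH c n le_rfl)
  -- (ii)
  have fact2 : ∀ k < c, G.Adj (p n) (p k) → Q.card + k + 1 ≤ c := by
    intro k hk hadjk
    have hd : Disjoint (Q ∪ seg p c n) (seg p 0 k) := by
      rw [Finset.disjoint_union_left]
      exact ⟨dQ Q hQH 0 k (by omega), (dseg 0 k c n hk le_rfl).symm⟩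
    have := hmax _ _ _ (hQP.concat (hP.seg_hp (Nat.zero_le k) (by omega)).symm hadjk hd)
    rw [Finset.card_union_of_disjoint hd, Finset.card_union_of_disjoint (dQ Q hQH c n le_rfl),
      hP.card_seg le_rfl, hP.card_seg (by omega)] at this
    omega
  -- (iii)
  have fact3 : ∀ j, j + 1 ≤ n → G.Adj a (p (j + 1)) → ¬ G.Adj (p n) (p j) := by
    intro j hj h1 h2
    have d1 : Disjoint {a} (seg p (j + 1) n) := dQ {a} (by simpa using haH) _ _ le_rfl
    have d2 : Disjoint ({a} ∪ seg p (j + 1) n) (seg p 0 j) := by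
      rw [Finset.disjoint_union_left]
      exact ⟨dQ {a} (by simpa using haH) 0 j (by omega), (dseg 0 j (j + 1) n (by omega) le_rfl).symm⟩
    have := hmax _ _ _ (((HP.single a).concat (hP.seg_hp hj le_rfl) h1 d1).concat
      (hP.seg_hp (Nat.zero_le j) (by omega)).symm h2 d2)
    rw [Finset.card_union_of_disjoint d2, Finset.card_union_of_disjoint d1,
      hP.card_seg le_rfl, hP.card_seg (by omega), Finset.card_singleton] at this
    omega
  have hpred : ∀ E' ⊆ E, (∀ j ∈ E', 1 ≤ j) →
      (E'.image (fun j => p (j - 1))).card = E'.card := by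
    intro E' hE' h1
    refine Finset.card_image_of_injOn ?_
    intro i hi j hj hij
    have h2 := (hEm i).1 (hE' hi)
    have h3 := (hEm j).1 (hE' hj)
    have h4 := h1 i hi
    have h5 := h1 j hj
    have := hp2 (i - 1) (by omega) (j - 1) (by omega) hij
    omega
  have hpredA : ∀ j, 1 ≤ j → j ∈ E → p (j - 1) ∈ A ∧ ¬ G.Adj (p n) (p (j - 1)) := by
    intro j hj hjE
    obtain ⟨h1, h2⟩ := (hEm j).1 hjE
    have h3 := hp1 (j - 1) (by omega)
    have h4 := fact3 (j - 1)
    rw [show j - 1 + 1 = j by omega] at h3 h4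
    have h5 := hadj _ _ h2
    have h6 := hadj _ _ h3
    exact ⟨by tauto, h4 h1 h2⟩
  have hX1c : t ≤ (G.neighborFinset (p n)).card := by
    rw [SimpleGraph.card_neighborFinset_eq_degree]; exact ht _ hy
  have hX1A : ∀ v ∈ G.neighborFinset (p n), v ∈ A := by
    intro v hv
    have := hadj _ _ ((SimpleGraph.mem_neighborFinset _ _ _).1 hv)
    tauto
  by_cases hcase : ∃ k ≤ n, G.Adj (p n) (p k) ∧ k < c
  · -- case 1
    obtain ⟨k, hkn, ⟨hk, hkc⟩, hkmin⟩ := exists_min_idx _ n hcase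
    have hf2 := fact2 k hkc hk
    have hCyc : Cyc G (seg p k n) :=
      ⟨p k, p n, hP.seg_hp hkn le_rfl, hk, by rw [hP.card_seg le_rfl]; omega⟩
    refine ⟨_, hCyc, ?_⟩
    rw [hCyc.balance A hadj]
    have hmemC : ∀ i ≤ n, k ≤ i → p i ∈ seg p k n := fun i hi hki =>
      (hP.mem_seg le_rfl hi).2 ⟨hki, hi⟩
    set X1 := G.neighborFinset (p n) with hX1
    set X2 := (E.image (fun j => p (j - 1))).erase (p (c - 1)) with hX2
    set X3 := seg p (c - Q.card) (c - 1) ∩ A with hX3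
    have hX3c : D.card ≤ X3.card := by
      have h1 := (hP.seg_hp (i := c - Q.card) (j := c - 1) (by omega) (by omega)).balance A hadj
      rw [hP.card_seg (by omega), ← hX3] at h1
      have h2 : c - 1 + 1 - (c - Q.card) = Q.card := by omega
      rw [h2] at h1
      split_ifs at h1 <;> omega
    have hX2c : E.card - 1 ≤ X2.card := by
      rw [← hpred E le_rfl (fun j hj => by have := hEc j hj; omega)]
      exact Finset.pred_card_le_card_erase
    have d1 : Disjoint X2 X3 := by
      rw [Finset.disjoint_left]
      intro v hv hv'
      obtain ⟨hne, hv⟩ := Finset.mem_erase.1 hv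
      obtain ⟨j, hj, rfl⟩ := Finset.mem_image.1 hv
      have h1 := hEc j hj
      have h2 := (hEm j).1 hj
      have h3 := (hP.mem_seg (by omega) (by omega)).1 (Finset.mem_inter.1 hv').1
      have : j = c := by omega
      exact hne (by rw [this])
    have d2 : Disjoint X1 (X2 ∪ X3) := by
      rw [Finset.disjoint_left]
      intro v hv hv'
      have hv1 := (SimpleGraph.mem_neighborFinset _ _ _).1 hv
      rcases Finset.mem_union.1 hv' with h1 | h1
      · obtain ⟨j, hj, rfl⟩ := Finset.mem_image.1 (Finset.mem_erase.1 h1).2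
        exact (hpredA j (by have := hEc j hj; omega) hj).2 hv1
      · obtain ⟨i, i1, i2, rfl⟩ := mem_seg.1 (Finset.mem_inter.1 h1).1
        have := fact2 i (by omega) hv1
        omega
    have hsub : X1 ∪ (X2 ∪ X3) ⊆ seg p k n ∩ A := by
      intro v hv
      simp only [Finset.mem_union] at hv
      rcases hv with h1 | h1 | h1
      · have h2 := (SimpleGraph.mem_neighborFinset _ _ _).1 h1
        obtain ⟨i, hi, rfl⟩ := (hS v).1 (hNn v h2)
        refine Finset.mem_inter.2 ⟨hmemC i hi ?_, hX1A _ h1⟩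
        by_cases hic : i < c
        · exact hkmin i ⟨h2, hic⟩
        · omega
      · obtain ⟨j, hj, rfl⟩ := Finset.mem_image.1 (Finset.mem_erase.1 h1).2
        have h2 := hEc j hj
        have h3 := (hEm j).1 hj
        exact Finset.mem_inter.2 ⟨hmemC _ (by omega) (by omega), (hpredA j (by omega) hj).1⟩
      · have h2 := Finset.mem_inter.1 h1
        obtain ⟨i, i1, i2, rfl⟩ := mem_seg.1 h2.1
        exact Finset.mem_inter.2 ⟨hmemC i (by omega) (by omega), h2.2⟩
    have := Finset.card_le_card hsub
    rw [Finset.card_union_of_disjoint d2, Finset.card_union_of_disjoint d1] at this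
    omega
  · -- case 2
    push Not at hcase
    have hmemP : ∀ i ≤ n, c ≤ i → p i ∈ Q ∪ seg p c n := fun i hi hki =>
      Finset.mem_union_right _ ((hP.mem_seg le_rfl hi).2 ⟨hki, hi⟩)
    have hNn' : ∀ v, G.Adj (p n) v → ∃ i, c ≤ i ∧ i ≤ n ∧ p i = v := by
      intro v hv
      obtain ⟨i, hi, rfl⟩ := (hS v).1 (hNn v hv)
      exact ⟨i, hcase i hi hv, hi, rfl⟩
    obtain ⟨C, hC, hc⟩ := cycle_of_path H2 A hadj hdeg hQP haA
      (by
        intro v hv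
        rcases hNa v hv with h1 | ⟨j, h1, h2, rfl⟩
        · exact Finset.mem_union_left _ h1
        · exact hmemP j h2 h1)
      (by
        intro v hv
        obtain ⟨i, h1, h2, rfl⟩ := hNn' v hv
        exact hmemP i h2 h1)
    refine ⟨C, hC, ?_⟩
    rcases hc with hc | ⟨-, hc⟩ | ⟨h1, -⟩
    · have hbal := hQP.balance A hadj
      simp only [haA, hy, if_true, if_false] at hbal
      have hbC := hC.balance A hadj
      set X1 := G.neighborFinset (p n) with hX1
      set X2 := (E.erase c).image (fun j => p (j - 1)) with hX2
      set X3 := Q ∩ A with hX3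
      have hlt : ∀ j ∈ E.erase c, c + 1 ≤ j := by
        intro j hj
        have := Finset.mem_erase.1 hj
        have := hEc j this.2
        omega
      have hX2c : E.card - 1 ≤ X2.card := by
        rw [hX2, hpred (E.erase c) (Finset.erase_subset _ _) (fun j hj => by
          have := hlt j hj; omega)]
        exact Finset.pred_card_le_card_erase
      have d1 : Disjoint X2 X3 := by
        rw [Finset.disjoint_left]
        intro v hv hv'
        obtain ⟨j, hj, rfl⟩ := Finset.mem_image.1 hv
        have h2 := (hEm j).1 (Finset.mem_of_mem_erase hj)
        exact hQnp (j - 1) (by omega) (Finset.mem_inter.1 hv').1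
      have d2 : Disjoint X1 (X2 ∪ X3) := by
        rw [Finset.disjoint_left]
        intro v hv hv'
        have hv1 := (SimpleGraph.mem_neighborFinset _ _ _).1 hv
        rcases Finset.mem_union.1 hv' with h1 | h1
        · obtain ⟨j, hj, rfl⟩ := Finset.mem_image.1 h1
          exact (hpredA j (by have := hlt j hj; omega) (Finset.mem_of_mem_erase hj)).2 hv1
        · obtain ⟨i, i1, i2, rfl⟩ := hNn' v hv1
          exact hQnp i i2 (Finset.mem_inter.1 h1).1
      have hsub : X1 ∪ (X2 ∪ X3) ⊆ (Q ∪ seg p c n) ∩ A := by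
        intro v hv
        simp only [Finset.mem_union] at hv
        rcases hv with h1 | h1 | h1
        · have h2 := (SimpleGraph.mem_neighborFinset _ _ _).1 h1
          obtain ⟨i, i1, i2, rfl⟩ := hNn' v h2
          exact Finset.mem_inter.2 ⟨hmemP i i2 i1, hX1A _ h1⟩
        · obtain ⟨j, hj, rfl⟩ := Finset.mem_image.1 h1
          have h2 := hlt j hj
          have hj' := Finset.mem_of_mem_erase hj
          have h3 := (hEm j).1 hj'
          exact Finset.mem_inter.2 ⟨hmemP _ (by omega) (by omega), (hpredA j (by omega) hj').1⟩
        · have h2 := Finset.mem_inter.1 h1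
          exact Finset.mem_inter.2 ⟨Finset.mem_union_left _ h2.1, h2.2⟩
      have := Finset.card_le_card hsub
      rw [Finset.card_union_of_disjoint d2, Finset.card_union_of_disjoint d1] at this
      omega
    · have := hs a haA
      have := ht _ hy
      omega
    · exact absurd h1 hy


/-- main theorem in terms of `HP` -/
theorem jackson_aux [Fintype V] [Nonempty V] [DecidableRel G.Adj]
    (H1 : ∀ x y : V, ∃ S, HP G S x y)
    (H2 : ∀ c x y : V, x ≠ c → y ≠ c → ∃ S, HP G S x y ∧ c ∉ S)
    (A B : Finset V) (hAB : ∀ v, v ∈ B ↔ v ∉ A)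
    (hadj : ∀ u v, G.Adj u v → (u ∈ A ↔ v ∉ A)) (hdeg : ∀ v, 2 ≤ G.degree v)
    (hA : B.card ≤ A.card) (s t : ℕ)
    (hs : ∀ a ∈ A, s ≤ G.degree a) (ht : ∀ b, b ∉ A → t ≤ G.degree b) :
    ∃ C, Cyc G C ∧ 2 * min B.card (min (s + t - 1) (2 * s - 2)) ≤ C.card := by
  classical
  have hcardV : Fintype.card V = A.card + B.card := by
    have : B = Aᶜ := by ext v; simp [hAB]
    rw [this, Finset.card_compl]
    have := Finset.card_le_univ A
    omega
  -- a longest path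
  obtain ⟨S, ⟨x, y, h⟩, hmax'⟩ : ∃ S, (∃ x y, HP G S x y) ∧ ∀ S', (∃ x y, HP G S' x y) →
      S'.card ≤ S.card := by
    obtain ⟨v⟩ := ‹Nonempty V›
    obtain ⟨S, hS, hm⟩ := Finset.exists_max_image
      ((Finset.univ : Finset (Finset V)).filter (fun S => ∃ x y, HP G S x y)) Finset.card
      ⟨{v}, by simpa using ⟨v, v, HP.single v⟩⟩
    exact ⟨S, (Finset.mem_filter.1 hS).2, fun S' hS' => hm S' (by simpa using hS')⟩
  have hmax : ∀ S' x' y', HP G S' x' y' → S'.card ≤ S.card := fun S' x' y' h' =>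
    hmax' S' ⟨x', y', h'⟩
  clear hmax'
  have hN : ∀ S x y, HP G S x y → (∀ S' x' y', HP G S' x' y' → S'.card ≤ S.card) →
      ∀ v, G.Adj y v → v ∈ S := by
    intro S x y h hm v hv
    by_contra hvS
    have := hm _ _ _ (h.snoc hv hvS)
    rw [Finset.card_insert_of_notMem hvS] at this
    omega
  have hBB : ∀ S' x' y', HP G S' x' y' → S'.card = S.card → x' ∉ A → y' ∉ A →
      ∃ C, Cyc G C ∧ 2 * min B.card (min (s + t - 1) (2 * s - 2)) ≤ C.card := by
    intro S' x' y' h' hc hx' hy'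
    obtain ⟨C, hC, hc⟩ := case_BB H1 H2 A hadj hdeg (by omega) s t hs ht h' hx' hy'
      (fun S1 x1 y1 h1 => hc ▸ hmax S1 x1 y1 h1)
    exact ⟨C, hC, by omega⟩
  -- a longest path with an end in `A`
  have main : ∀ x y, HP G S x y → x ∈ A →
      ∃ C, Cyc G C ∧ 2 * min B.card (min (s + t - 1) (2 * s - 2)) ≤ C.card := by
    clear! x y
    intro x y h hx
    have hsx := hs x hx
    obtain ⟨C, hC, hc⟩ := cycle_of_path H2 A hadj hdeg h hx (hN _ _ _ h.symm hmax) (hN _ _ _ h hmax)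
    rcases hc with hc | ⟨hy, hc⟩ | ⟨hy, hc⟩
    · by_cases hCB : 2 * B.card ≤ C.card
      · exact ⟨C, hC, by omega⟩
      have hbal := hC.balance A hadj
      have hCB' : (C ∩ B).card < B.card := by
        have : (C \ A).card + (C ∩ A).card = C.card := Finset.card_sdiff_add_card_inter C A
        have h2 : C ∩ B = C \ A := by ext v; simp [hAB]
        rw [h2]; omega
      obtain ⟨b, hbB, hbC⟩ : ∃ b ∈ B, b ∉ C := by
        by_contra hcon
        push Not at hcon
        rw [Finset.inter_eq_right.2 hcon] at hCB'
        omega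
      have hbA := (hAB b).1 hbB
      obtain ⟨z0, hz0⟩ : C.Nonempty := by
        obtain ⟨x', y', h', -⟩ := hC
        exact ⟨x', h'.left_mem⟩
      -- a vertex different from `b` and from `z0`, to be avoided
      obtain ⟨J, z, y', hJ, hz, hy', -, hJz, hJC⟩ : ∃ J z y', HP G J z y' ∧ z ∈ ({b} : Finset V) ∧
          y' ∈ C ∧ True ∧ (∀ v ∈ J, v ∈ ({b} : Finset V) → v = z) ∧ (∀ v ∈ J, v ∈ C → v = y') := by
        obtain ⟨c0, hc0, hc0'⟩ : ∃ c0 ∈ C, c0 ≠ z0 := by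
          have h3 : 1 < C.card := by
            obtain ⟨_, _, _, _, h3⟩ := hC; omega
          exact Finset.exists_mem_ne h3 z0
        obtain ⟨J, z, y', h1, h2, h3, h4, h5, h6⟩ := exists_jump H2 {b} (C.erase c0) c0 b z0
          (by simp) (by simp [hz0, hc0'.symm]) (by rintro rfl; exact hbC hc0) hc0'.symm
        refine ⟨J, z, y', h1, h2, Finset.mem_of_mem_erase h3, trivial, h5, ?_⟩
        intro v hv hvC
        exact h6 v hv (Finset.mem_erase.2 ⟨by rintro rfl; exact h4 hv, hvC⟩)
      obtain rfl : z = b := by simpa using hz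
      obtain ⟨w, hw, hyw⟩ := hC.open_at hy'
      have hg := hw.glue hJ.symm (fun v h1 h2 => hJC v h2 h1)
      have hcard : (C ∪ J).card + 1 = C.card + J.card := by
        rw [← Finset.card_union_add_card_inter]
        have : C ∩ J = {y'} := by
          ext v
          simp only [Finset.mem_inter, Finset.mem_singleton]
          constructor
          · rintro ⟨h1, h2⟩; exact hJC v h2 h1
          · rintro rfl; exact ⟨hy', hJ.right_mem⟩
        rw [this, Finset.card_singleton]
      have hzy : z ≠ y' := by rintro rfl; exact hbC hy'
      obtain ⟨J', j', hJ', hj', hzJ', rfl⟩ := hJ.tail hzy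
      have hJ1 : 1 ≤ J'.card := Finset.card_pos.2 ⟨j', hJ'.left_mem⟩
      rw [Finset.card_insert_of_notMem hzJ'] at hcard
      have hle := hmax _ _ _ hg
      have hJ2 : J'.card = 1 := by omega
      have hjy : j' = y' := by
        obtain ⟨q, hq⟩ := Finset.card_eq_one.1 hJ2
        have h1 := hJ'.left_mem
        have h2 := hJ'.right_mem
        rw [hq, Finset.mem_singleton] at h1 h2
        rw [h1, h2]
      subst hjy
      refine hBB _ _ _ hg (by omega) ?_ hbA
      have h1 := hadj _ _ hyw
      have h2 := hadj _ _ hj'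
      tauto
    · exact ⟨C, hC, by have := ht y hy; omega⟩
    · exact ⟨C, hC, by have := hs y hy; omega⟩
  by_cases hx : x ∈ A
  · exact main x y h hx
  by_cases hy : y ∈ A
  · exact main y x h.symm hy
  exact hBB S x y h rfl hx hy

theorem two_le_degree [Fintype V] [DecidableRel G.Adj] (h3 : 2 < Fintype.card V)
    (H1 : ∀ x y : V, ∃ S, HP G S x y)
    (H2 : ∀ c x y : V, x ≠ c → y ≠ c → ∃ S, HP G S x y ∧ c ∉ S) (v : V) : 2 ≤ G.degree v := by
  obtain ⟨w, hw⟩ : ∃ w, w ≠ v := by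
    have : Nontrivial V := Fintype.one_lt_card_iff_nontrivial.1 (by omega)
    exact exists_ne v
  obtain ⟨S, hS⟩ := H1 v w
  obtain ⟨S', u, -, hu, -⟩ := hS.tail hw.symm
  obtain ⟨z, hz⟩ : ∃ z, z ∉ ({v, u} : Finset V) := by
    by_contra hcon
    push Not at hcon
    have h1 : (Finset.univ : Finset V) ⊆ {v, u} := fun z _ => hcon z
    have := Finset.card_le_card h1
    have := Finset.card_le_two (a := v) (b := u)
    rw [Finset.card_univ] at *
    omega
  simp only [Finset.mem_insert, Finset.mem_singleton, not_or] at hz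
  obtain ⟨T, hT, huT⟩ := H2 u v z hu.ne hz.2
  obtain ⟨T', u', hT', hu', -, rfl⟩ := hT.tail (Ne.symm hz.1)
  have hne : u ≠ u' := by
    rintro rfl
    exact huT (Finset.mem_insert_of_mem hT'.left_mem)
  rw [← SimpleGraph.card_neighborFinset_eq_degree]
  have : ({u, u'} : Finset V) ⊆ G.neighborFinset v := by
    intro q hq
    rw [SimpleGraph.mem_neighborFinset]
    simp only [Finset.mem_insert, Finset.mem_singleton] at hq
    rcases hq with rfl | rfl <;> assumption
  have h4 := Finset.card_le_card this
  rwa [Finset.card_pair hne] at h4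

end Helpers

theorem jackson_long_cycle
    {V : Type*} [Fintype V] [DecidableEq V] (G : SimpleGraph V) [DecidableRel G.Adj]
    (hconn : KConnected 2 G)
    (A B : Finset V) (hdisj : Disjoint A B) (hcover : A ∪ B = Finset.univ)
    (hAB : B.card ≤ A.card)
    (hbip : ∀ u v, G.Adj u v → (u ∈ A ∧ v ∈ B) ∨ (u ∈ B ∧ v ∈ A))
    (s t : ℕ) (hs : ∀ a ∈ A, s ≤ G.degree a) (ht : ∀ b ∈ B, t ≤ G.degree b) :
    ∃ (u : V) (c : G.Walk u u), c.IsCycle ∧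
      2 * min B.card (min (s + t - 1) (2 * s - 2)) ≤ c.length := by
  obtain ⟨h3, hc⟩ := hconn
  have hB : ∀ v, v ∈ B ↔ v ∉ A := by
    intro v
    have h1 : v ∈ A ∪ B := by rw [hcover]; simp
    have h2 : v ∈ A → v ∉ B := fun h => Finset.disjoint_left.1 hdisj h
    rw [Finset.mem_union] at h1
    tauto
  have H1 : ∀ x y : V, ∃ S, HP G S x y := by
    intro x y
    obtain ⟨S, hS, -⟩ := HP.of_connected (hc ∅ (by simp)) (x := x) (y := y) (by simp) (by simp)
    exact ⟨S, hS⟩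
  have H2 : ∀ c x y : V, x ≠ c → y ≠ c → ∃ S, HP G S x y ∧ c ∉ S := by
    intro c x y hx hy
    obtain ⟨S, hS, h⟩ := HP.of_connected (hc {c} (by simp)) (x := x) (y := y)
      (by simpa using hx) (by simpa using hy)
    exact ⟨S, hS, fun hcS => by simpa using h c hcS⟩
  have hadj : ∀ u v, G.Adj u v → (u ∈ A ↔ v ∉ A) := by
    intro u v h
    have h1 := hbip u v h
    rw [hB, hB] at h1
    tauto
  have : Nonempty V := Fintype.card_pos_iff.1 (by omega)
  obtain ⟨C, hC, hle⟩ := jackson_aux H1 H2 A B hB hadj (two_le_degree h3 H1 H2) hAB s t hs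
    (fun b hb => ht b ((hB b).2 hb))
  obtain ⟨u, c, h1, h2⟩ := hC.walk
  exact ⟨u, c, h1, by omega⟩
end
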